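/- arXiv:math/0111112 — 2 statements merged into one kernel-verified Lean document; each statement's English description precedes it below -/
import Mathlib

section
/- Let m' ≥ m and n' ≥ n be positive integers. There exists a (necessarily unique) k_q-algebra homomorphism r^q_{(m,n,m',n')} : k_q[Δ_{m,n}] → k_q[Δ_{m',n'}] such that r^q(D_{l_0...l_{m-1}}) = D_{-m',...,-m-1,l_0,...,l_{m-1}} for all -m ≤ l_0 < ... < l_{m-1} ≤ n-1. Moreover e^q_{(m',n',m,n)} ∘ r^q_{(m,n,m',n')} is the identity of k_q[Δ_{m,n}]; in particular r^q_{(m,n,m',n')} is injective. -/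
set_option maxHeartbeats 2000000
set_option synthInstance.maxHeartbeats 400000

noncomputable section

open TensorProduct

/-- `k_q = k[q, q⁻¹]`, the ring of Laurent polynomials over `k`. -/
abbrev kq (k : Type) [Field k] : Type := LaurentPolynomial k

/-- The parameter `q ∈ k_q`. -/
def qParam (k : Type) [Field k] : kq k := LaurentPolynomial.T 1

/-- The inverse parameter `q⁻¹ ∈ k_q`. -/
def qInv (k : Type) [Field k] : kq k := LaurentPolynomial.T (-1)

/-- Row indices of the generic `(m+n) × m` quantum matrix: integers `-m, ..., n-1`. -/
abbrev RowI (m n : ℕ) : Type := ↥(Finset.Icc (-(m : ℤ)) ((n : ℤ) - 1))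

/-- Column indices: integers `-m, ..., -1`. -/
abbrev ColI (m : ℕ) : Type := ↥(Finset.Icc (-(m : ℤ)) (-1 : ℤ))

/-- The defining relations of a quantum matrix algebra, with rows indexed by `R` and
columns indexed by `C`. -/
inductive QMRel (k : Type) [Field k] (R C : Type) [LinearOrder R] [LinearOrder C] :
    FreeAlgebra (kq k) (R × C) → FreeAlgebra (kq k) (R × C) → Prop
  | col (i i' : R) (j : C) (h : i < i') :
      QMRel k R C (FreeAlgebra.ι (kq k) (i, j) * FreeAlgebra.ι (kq k) (i', j))
        (qInv k • (FreeAlgebra.ι (kq k) (i', j) * FreeAlgebra.ι (kq k) (i, j)))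
  | row (i : R) (j j' : C) (h : j < j') :
      QMRel k R C (FreeAlgebra.ι (kq k) (i, j) * FreeAlgebra.ι (kq k) (i, j'))
        (qInv k • (FreeAlgebra.ι (kq k) (i, j') * FreeAlgebra.ι (kq k) (i, j)))
  | comm (i i' : R) (j j' : C) (h1 : i < i') (h2 : j' < j) :
      QMRel k R C (FreeAlgebra.ι (kq k) (i, j) * FreeAlgebra.ι (kq k) (i', j'))
        (FreeAlgebra.ι (kq k) (i', j') * FreeAlgebra.ι (kq k) (i, j))
  | qcomm (i i' : R) (j j' : C) (h1 : i < i') (h2 : j < j') :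
      QMRel k R C
        (FreeAlgebra.ι (kq k) (i, j) * FreeAlgebra.ι (kq k) (i', j') -
          FreeAlgebra.ι (kq k) (i', j') * FreeAlgebra.ι (kq k) (i, j))
        ((qInv k - qParam k) • (FreeAlgebra.ι (kq k) (i', j) * FreeAlgebra.ι (kq k) (i, j')))

/-- The quantum matrix algebra with rows indexed by `R` and columns indexed by `C`. -/
abbrev QMatG (k : Type) [Field k] (R C : Type) [LinearOrder R] [LinearOrder C] : Type :=
  RingQuot (QMRel k R C)

/-- The generator `a_{r,c}` of the quantum matrix algebra. -/
def qgen (k : Type) [Field k] (R C : Type) [LinearOrder R] [LinearOrder C] (r : R) (c : C) :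
    QMatG k R C :=
  RingQuot.mkAlgHom (kq k) (QMRel k R C) (FreeAlgebra.ι (kq k) (r, c))

/-- The rectangular quantum matrix algebra `k_q[a]_{m,n}`. -/
abbrev QMat (k : Type) [Field k] (m n : ℕ) : Type := QMatG k (RowI m n) (ColI m)

/-- The generator `a_{i,j}` of `k_q[a]_{m,n}`. -/
def av (k : Type) [Field k] (m n : ℕ) (i : RowI m n) (j : ColI m) : QMat k m n :=
  qgen k (RowI m n) (ColI m) i j

/-- The number of inversions of a map between finite linearly ordered sets. -/
def inversions {a b : ℕ} (f : Fin a → Fin b) : ℕ :=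
  ((Finset.univ : Finset (Fin a × Fin a)).filter fun p => p.1 < p.2 ∧ f p.2 < f p.1).card

/-- The coefficient `(-q)^{-ℓ}`. -/
def qCoeff (k : Type) [Field k] (l : ℕ) : kq k :=
  (-1 : kq k) ^ l * LaurentPolynomial.T (-(l : ℤ))

/-- The general quantum minor on rows `row 0 < row 1 < ⋯` and columns
`col 0 < col 1 < ⋯`:
`Σ_σ (-q)^{-ℓ(σ)} a_{row 0, col (σ 0)} ⋯ a_{row (s-1), col (σ (s-1))}`. -/
def qMinorG (k : Type) [Field k] (R C : Type) [LinearOrder R] [LinearOrder C]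
    (s : ℕ) (row : Fin s → R) (col : Fin s → C) : QMatG k R C :=
  ∑ σ : Equiv.Perm (Fin s),
    qCoeff k (inversions ⇑σ) •
      (List.ofFn fun t : Fin s => qgen k R C (row t) (col (σ t))).prod

/-- The quantum minor `D_{i_0 … i_{m-1}}` of `k_q[a]_{m,n}` on the rows in `I`. -/
def qMinor (k : Type) [Field k] (m n : ℕ) (I : Finset ℤ) (hI : I.card = m)
    (hsub : I ⊆ Finset.Icc (-(m : ℤ)) ((n : ℤ) - 1)) : QMat k m n :=
  qMinorG k (RowI m n) (ColI m) m
    (fun s => ⟨I.orderEmbOfFin hI s, hsub (Finset.orderEmbOfFin_mem I hI s)⟩)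
    (fun t => ⟨-(m : ℤ) + (t : ℕ), by
      have := t.2
      simp only [Finset.mem_Icc]
      omega⟩)

/-- The quantum grassmannian `k_q[Δ_{m,n}]`: the subalgebra of `k_q[a]_{m,n}` generated
by the quantum minors. -/
def QDeltaSub (k : Type) [Field k] (m n : ℕ) : Subalgebra (kq k) (QMat k m n) :=
  Algebra.adjoin (kq k) {x | ∃ I hI hsub, x = qMinor k m n I hI hsub}


/-- The defining property of `E^q_{(m',n',m,n)}` on the generators. -/
def EqProp (k : Type) [Field k] (m n m' n' : ℕ)
    (E : QMat k m' n' →ₐ[kq k] QMat k m n) : Prop :=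
  ∀ (i : RowI m' n') (j : ColI m'),
    E (av k m' n' i j) =
      if h : (i.1 ∈ Finset.Icc (-(m : ℤ)) ((n : ℤ) - 1)) ∧
          (j.1 ∈ Finset.Icc (-(m : ℤ)) (-1 : ℤ)) then
        av k m n ⟨i.1, h.1⟩ ⟨j.1, h.2⟩
      else if i.1 = j.1 then 1 else 0

/-- The defining property of `r^q_{(m,n,m',n')}` on the quantum minors:
`r^q(D_{l_0…l_{m-1}}) = D_{-m',…,-m-1,l_0,…,l_{m-1}}`. -/
def rqProp (k : Type) [Field k] (m n m' n' : ℕ)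
    (r : ↥(QDeltaSub k m n) →ₐ[kq k] ↥(QDeltaSub k m' n')) : Prop :=
  ∀ (I : Finset ℤ) (hI : I.card = m)
    (hsub : I ⊆ Finset.Icc (-(m : ℤ)) ((n : ℤ) - 1))
    (hmem : qMinor k m n I hI hsub ∈ QDeltaSub k m n)
    (hcard : (Finset.Icc (-(m' : ℤ)) (-(m : ℤ) - 1) ∪ I).card = m')
    (hsub' : Finset.Icc (-(m' : ℤ)) (-(m : ℤ) - 1) ∪ I ⊆
      Finset.Icc (-(m' : ℤ)) ((n' : ℤ) - 1)),
    (r ⟨qMinor k m n I hI hsub, hmem⟩ : QMat k m' n') =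
      qMinor k m' n' (Finset.Icc (-(m' : ℤ)) (-(m : ℤ) - 1) ∪ I) hcard hsub'

/-!
Since the quantum minors generate, `r^q` is determined by its values, and it suffices to border the
generic matrix by one row `p` and one column `c` at a time, with pivot `x = a_{p,c}`.

The `2 × 2` quantum minors through the pivot form again a quantum matrix `Y`, whose entries commute
with `x`. The entries of the generic matrix may therefore be sent to those of `Y` times a central
variable, and by the quantum Sylvester identity `x^m D_{p,I} = D_I(Y) x` a maximal minor `D_I` goes
to `x^{m-1} D_{p,I}` times a power of that variable. The pivot is left regular, so `x` can be
cancelled from the relations between these elements, with the variable keeping track of the degree;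
what remains are relations between the `D_{p,I}` themselves.

Left regularity of `x` is seen in a representation on the polynomials in `T` over the quantum matrix
algebra `A`: the relations survive adding to left multiplication by `x` the shift
`a Tⁿ ↦ σ(a) Tⁿ⁺¹` twisted by an automorphism `σ`. The new operator raises degrees, so it is
injective, while constant coefficients still see the multiplication of `A`.

For the retraction, every row added to a minor is a unit row, along which the minor expands.
-/

section QuantumMatrix

variable {K A R C R' C' : Type*} [CommRing K] [Ring A] [Algebra K A]
  [Preorder R] [Preorder C] [Preorder R'] [Preorder C'] {q : K} [Invertible q]

/-- A matrix over a `K`-algebra satisfies the quantum matrix relations with parameter `q`, that is,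
it is a point of the quantum matrix algebra; the relations are those of `QMRel`. -/
structure IsQuantumMatrix (q : K) [Invertible q] (X : Matrix R C A) : Prop where
  col : ∀ ⦃i i' : R⦄ (j : C), i < i' → X i j * X i' j = ⅟q • (X i' j * X i j)
  row : ∀ (i : R) ⦃j j' : C⦄, j < j' → X i j * X i j' = ⅟q • (X i j' * X i j)
  comm : ∀ ⦃i i' : R⦄ ⦃j j' : C⦄, i < i' → j' < j → X i j * X i' j' = X i' j' * X i j
  qcomm : ∀ ⦃i i' : R⦄ ⦃j j' : C⦄, i < i' → j < j' →
    X i j * X i' j' - X i' j' * X i j = (⅟q - q) • (X i' j * X i j')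

namespace IsQuantumMatrix

variable {X : Matrix R C A}

theorem submatrix (hX : IsQuantumMatrix q X) {f : R' → R} {g : C' → C} (hf : StrictMono f)
    (hg : StrictMono g) : IsQuantumMatrix q (X.submatrix f g) where
  col _ _ j h := hX.col (g j) (hf h)
  row i _ _ h := hX.row (f i) (hg h)
  comm _ _ _ _ h h' := hX.comm (hf h) (hg h')
  qcomm _ _ _ _ h h' := hX.qcomm (hf h) (hg h')

theorem transpose (hX : IsQuantumMatrix q X) : IsQuantumMatrix q X.transpose where
  col _ _ i h := hX.row i h
  row j _ _ h := hX.col j h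
  comm _ _ _ _ h h' := (hX.comm h' h).symm
  qcomm _ _ _ _ h h' := by
    simpa only [Matrix.transpose_apply, hX.comm h' h] using hX.qcomm h' h

theorem row_rev (hX : IsQuantumMatrix q X) (i : R) {j j' : C} (h : j < j') :
    X i j' * X i j = q • (X i j * X i j') := by
  rw [hX.row i h, smul_smul, mul_invOf_self, one_smul]

theorem qcomm_eq (hX : IsQuantumMatrix q X) {i i' : R} {j j' : C} (h : i < i') (h' : j < j') :
    X i j * X i' j' = X i' j' * X i j + (⅟q - q) • (X i' j * X i j') :=
  eq_add_of_sub_eq' (hX.qcomm h h')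

variable {B : Type*} [Ring B] [Algebra K B]

theorem map (hX : IsQuantumMatrix q X) (φ : A →ₐ[K] B) : IsQuantumMatrix q (X.map φ) where
  col _ _ j h := by simpa using congrArg φ (hX.col j h)
  row i _ _ h := by simpa using congrArg φ (hX.row i h)
  comm _ _ _ _ h h' := by simpa using congrArg φ (hX.comm h h')
  qcomm _ _ _ _ h h' := by simpa using congrArg φ (hX.qcomm h h')

theorem of_map {φ : A →ₐ[K] B} (hφ : Function.Injective φ) (hX : IsQuantumMatrix q (X.map φ)) :
    IsQuantumMatrix q X where
  col _ _ j h := hφ <| by simpa using hX.col j h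
  row i _ _ h := hφ <| by simpa using hX.row i h
  comm _ _ _ _ h h' := hφ <| by simpa using hX.comm h h'
  qcomm _ _ _ _ h h' := hφ <| by simpa using hX.qcomm h h'

theorem mul_central (hX : IsQuantumMatrix q X) {c : A} (hc : ∀ a, Commute c a) :
    IsQuantumMatrix q (X.map (· * c)) := by
  have mul_mul (a b : A) : a * c * (b * c) = a * b * (c * c) := by
    rw [mul_assoc, ← mul_assoc c, (hc b).eq, mul_assoc, mul_assoc]
  constructor
  · intro i i' j h
    simp only [Matrix.map_apply, mul_mul, hX.col j h, smul_mul_assoc]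
  · intro i j j' h
    simp only [Matrix.map_apply, mul_mul, hX.row i h, smul_mul_assoc]
  · intro i i' j j' h h'
    simp only [Matrix.map_apply, mul_mul, hX.comm h h']
  · intro i i' j j' h h'
    simp only [Matrix.map_apply, mul_mul, ← sub_mul, hX.qcomm h h', smul_mul_assoc]

theorem scale (hX : IsQuantumMatrix q X) (α : R → K) (β : C → K) :
    IsQuantumMatrix q (Matrix.of fun i j => (α i * β j) • X i j) := by
  constructor
  · intro i i' j h
    simp only [Matrix.of_apply, smul_mul_smul_comm, hX.col j h]
    module
  · intro i j j' h
    simp only [Matrix.of_apply, smul_mul_smul_comm, hX.row i h]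
    module
  · intro i i' j j' h h'
    simp only [Matrix.of_apply, smul_mul_smul_comm, hX.comm h h', mul_comm]
  · intro i i' j j' h h'
    simp only [Matrix.of_apply, smul_mul_smul_comm, hX.qcomm_eq h h']
    module

end IsQuantumMatrix

end QuantumMatrix

section QuantumDeterminant

variable {K A : Type*} [CommRing K] [Ring A] [Algebra K A]

/-- The quantum determinant `∑_σ (-q)^{-ℓ(σ)} X_{0,σ(0)} ⋯ X_{s-1,σ(s-1)}`. -/
def qdet (q : K) [Invertible q] {s : ℕ} (X : Matrix (Fin s) (Fin s) A) : A :=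
  ∑ σ : Equiv.Perm (Fin s), (-⅟q) ^ inversions σ • (List.ofFn fun t => X t (σ t)).prod

theorem map_qdet {B : Type*} [Ring B] [Algebra K B] (φ : A →ₐ[K] B) (q : K) [Invertible q] {s : ℕ}
    (X : Matrix (Fin s) (Fin s) A) : φ (qdet q X) = qdet q (X.map φ) := by
  simp only [qdet, map_sum, map_smul, map_list_prod, List.map_ofFn]
  rfl

theorem prod_ofFn_mul_right {M : Type*} [Monoid M] {n : ℕ} (f : Fin n → M) {c : M}
    (hc : ∀ i, Commute c (f i)) :
    (List.ofFn fun i => f i * c).prod = (List.ofFn f).prod * c ^ n := by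
  induction n with
  | zero => simp
  | succ n ih =>
    rw [List.ofFn_succ, List.ofFn_succ, List.prod_cons, List.prod_cons,
      ih _ fun i : Fin n => hc i.succ, pow_succ', mul_assoc, ← mul_assoc c,
      (Commute.list_prod_right (List.ofFn fun i : Fin n => f i.succ) c <|
        (List.forall_mem_ofFn_iff (P := Commute c)).2 fun i => hc i.succ).eq]
    simp only [mul_assoc]

theorem qdet_map_mul_right (q : K) [Invertible q] {s : ℕ} (X : Matrix (Fin s) (Fin s) A) {c : A}
    (hc : ∀ a, Commute c a) : qdet q (X.map (· * c)) = qdet q X * c ^ s := by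
  simp only [qdet, Finset.sum_mul, smul_mul_assoc, Matrix.map_apply]
  refine Finset.sum_congr rfl fun σ _ => ?_
  rw [prod_ofFn_mul_right _ fun t => hc _]

/-- The permutation of `Fin (n + 1)` assembled from the image `p.1` of `0` and the permutation `p.2`
describing the relative order of the other values. -/
def consPerm {n : ℕ} (p : Fin (n + 1) × Equiv.Perm (Fin n)) : Equiv.Perm (Fin (n + 1)) :=
  (Fin.cycleRange p.1)⁻¹ * Equiv.Perm.decomposeFin.symm (0, p.2)

theorem consPerm_zero {n : ℕ} (p : Fin (n + 1) × Equiv.Perm (Fin n)) : consPerm p 0 = p.1 := by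
  simp [consPerm]

theorem consPerm_succ {n : ℕ} (p : Fin (n + 1) × Equiv.Perm (Fin n)) (t : Fin n) :
    consPerm p t.succ = p.1.succAbove (p.2 t) := by
  simp [consPerm]

theorem consPerm_bijective (n : ℕ) : Function.Bijective (consPerm (n := n)) := by
  refine (Fintype.bijective_iff_injective_and_card _).2 ⟨?_, by
    simp [Fintype.card_perm, Nat.factorial_succ]⟩
  rintro ⟨j, e⟩ ⟨j', e'⟩ h
  obtain rfl : j = j' := by simpa only [consPerm_zero] using DFunLike.congr_fun h 0
  refine Prod.ext rfl (Equiv.ext fun t => Fin.succAbove_right_injective (p := j) ?_)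
  simpa only [consPerm_succ] using DFunLike.congr_fun h t.succ

theorem inversions_eq_sum {a b : ℕ} (f : Fin a → Fin b) :
    inversions f = ∑ s : Fin a, ∑ t : Fin a, if s < t ∧ f t < f s then 1 else 0 := by
  rw [inversions, Finset.card_filter, ← Finset.univ_product_univ, Finset.sum_product]

theorem inversions_consPerm {n : ℕ} (p : Fin (n + 1) × Equiv.Perm (Fin n)) :
    inversions (consPerm p) = p.1 + inversions p.2 := by
  have hfirst : ∑ t : Fin n, (if p.1.succAbove (p.2 t) < p.1 then 1 else 0) = (p.1 : ℕ) := by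
    rw [Equiv.sum_comp p.2 (fun t => if p.1.succAbove t < p.1 then 1 else 0)]
    simp only [Fin.succAbove_lt_iff_castSucc_lt, ← Finset.card_filter]
    have : (Finset.univ.filter fun t : Fin n => t.castSucc < p.1) =
        Finset.univ.filter fun t : Fin n => (t : ℕ) < p.1 := by
      simp only [Fin.lt_def, Fin.val_castSucc]
    rw [this, Fin.card_filter_val_lt, min_eq_right (Nat.le_of_lt_succ p.1.2)]
  simp only [inversions_eq_sum, Fin.sum_univ_succ, consPerm_zero, consPerm_succ,
    false_and, if_false, zero_add, Fin.succ_pos, true_and, hfirst, Fin.not_lt_zero,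
    Fin.succ_lt_succ_iff, Fin.succAbove_lt_succAbove_iff]

theorem qdet_succ_row_zero (q : K) [Invertible q] {s : ℕ}
    (X : Matrix (Fin (s + 1)) (Fin (s + 1)) A) :
    qdet q X = ∑ j : Fin (s + 1),
      (-⅟q) ^ (j : ℕ) • (X 0 j * qdet q (X.submatrix Fin.succ j.succAbove)) := by
  simp only [qdet, Matrix.submatrix_apply, Finset.mul_sum, Finset.smul_sum, mul_smul_comm,
    smul_smul, ← pow_add]
  rw [← Function.Bijective.sum_comp (consPerm_bijective s), Fintype.sum_prod_type]
  simp only [inversions_consPerm, List.ofFn_succ, List.prod_cons, consPerm_zero, consPerm_succ]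

theorem qdet_eq_of_row_zero_eq_single (q : K) [Invertible q] {s : ℕ}
    {X : Matrix (Fin (s + 1)) (Fin (s + 1)) A} (h₀ : X 0 0 = 1) (h : ∀ j : Fin s, X 0 j.succ = 0) :
    qdet q X = qdet q (X.submatrix Fin.succ Fin.succ) := by
  rw [qdet_succ_row_zero, Fin.sum_univ_succ]
  simp [h₀, h]

end QuantumDeterminant

section ExteriorAlgebra

variable {K A C : Type*} [CommRing K] [Ring A] [Algebra K A] [LinearOrder C]

/-- Left multiplication by the one-form `∑_j v_j ξ_j` on the quantum exterior algebra with
`ξ_l ξ_j = ν ξ_j ξ_l` for `j < l`, whose elements are given by their coefficients on the ordered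
monomials `ξ_S`. -/
def wedge (ν : K) : (C → A) →ₗ[K] Module.End K (Finset C → A) :=
  LinearMap.mk₂ K
    (fun v f S => ∑ j ∈ S, ν ^ (S.filter (· < j)).card • (v j * f (S.erase j)))
    (fun v w f => by ext S; simp [add_mul, Finset.sum_add_distrib])
    (fun c v f => by ext S; simp [Finset.smul_sum, smul_comm c])
    (fun v f g => by ext S; simp [mul_add, Finset.sum_add_distrib])
    (fun c v f => by ext S; simp [Finset.smul_sum, smul_comm c])

theorem wedge_apply (ν : K) (v : C → A) (f : Finset C → A) (S : Finset C) :
    wedge ν v f S = ∑ j ∈ S, ν ^ (S.filter (· < j)).card • (v j * f (S.erase j)) :=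
  rfl

/-- The unit `ξ_∅` of the quantum exterior algebra. -/
def vacuum : Finset C → A := Pi.single ∅ 1

theorem sum_sum_erase_eq_sum_sum_lt {M : Type*} [AddCommMonoid M] (S : Finset C) (g : C → C → M) :
    ∑ j ∈ S, ∑ l ∈ S.erase j, g j l = ∑ j ∈ S, ∑ l ∈ S.filter (j < ·), (g j l + g l j) := by
  have split (j : C) : S.erase j = S.filter (j < ·) ∪ S.filter (· < j) := by
    ext l
    simp only [Finset.mem_erase, Finset.mem_union, Finset.mem_filter, ← and_or_left,
      ← ne_iff_lt_or_gt, ne_comm (a := l), and_comm (a := j ≠ l)]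
  have disjoint (j : C) : Disjoint (S.filter (j < ·)) (S.filter (· < j)) :=
    Finset.disjoint_filter.2 fun _ _ => lt_asymm
  simp only [split, Finset.sum_union (disjoint _), Finset.sum_add_distrib]
  congr 1
  exact Finset.sum_comm' (by simp only [Finset.mem_filter]; tauto)

theorem filter_lt_erase_of_le {S : Finset C} {j l : C} (h : l ≤ j) :
    (S.erase j).filter (· < l) = S.filter (· < l) := by
  rw [Finset.filter_erase, Finset.erase_eq_of_notMem (by simp [h])]

theorem card_filter_lt_erase_of_lt {S : Finset C} {j l : C} (hj : j ∈ S) (h : j < l) :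
    ((S.erase j).filter (· < l)).card + 1 = (S.filter (· < l)).card := by
  rw [Finset.filter_erase, Finset.card_erase_add_one (by simp [hj, h])]

theorem wedge_wedge_apply (ν : K) (v w : C → A) (f : Finset C → A) (S : Finset C) :
    wedge ν v (wedge ν w f) S = ∑ j ∈ S, ∑ l ∈ S.filter (j < ·),
      ν ^ ((S.filter (· < j)).card + ((S.erase j).filter (· < l)).card) •
        ((v j * w l + ν • (v l * w j)) * f ((S.erase j).erase l)) := by
  simp only [wedge_apply, Finset.mul_sum, Finset.smul_sum, mul_smul_comm, smul_smul, ← pow_add]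
  rw [sum_sum_erase_eq_sum_sum_lt]
  refine Finset.sum_congr rfl fun j hj => Finset.sum_congr rfl fun l hl => ?_
  obtain ⟨-, hjl⟩ := Finset.mem_filter.1 hl
  rw [filter_lt_erase_of_le hjl.le, ← card_filter_lt_erase_of_lt hj hjl,
    Finset.erase_right_comm (a := l)]
  simp only [add_mul, smul_add, smul_mul_assoc, smul_smul, ← pow_succ, mul_assoc]
  congr 3
  omega

theorem wedge_mul_wedge_eq_smul (ν c : K) {v w v' w' : C → A}
    (h : ∀ j l, j < l → v j * w l + ν • (v l * w j) = c • (v' j * w' l + ν • (v' l * w' j))) :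
    wedge ν v * wedge ν w = c • (wedge ν v' * wedge ν w') := by
  refine LinearMap.ext fun f => funext fun S => ?_
  simp only [Module.End.mul_apply, LinearMap.smul_apply, Pi.smul_apply, wedge_wedge_apply,
    Finset.smul_sum]
  refine Finset.sum_congr rfl fun j _ => Finset.sum_congr rfl fun l hl => ?_
  rw [h j l (Finset.mem_filter.1 hl).2, smul_mul_assoc, smul_comm]

section QuantumMatrix

variable {q : K} [Invertible q]

theorem IsQuantumMatrix.wedge_mul_wedge {R : Type*} [Preorder R] {X : Matrix R C A}
    (hX : IsQuantumMatrix q X) {i k : R} (hik : i < k) :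
    wedge (-⅟q) (X i) * wedge (-⅟q) (X k) = -q • (wedge (-⅟q) (X k) * wedge (-⅟q) (X i)) := by
  refine wedge_mul_wedge_eq_smul _ _ fun j l hjl => ?_
  have hq := mul_invOf_self q
  rw [hX.qcomm_eq hik hjl, hX.comm hik hjl]
  match_scalars <;> grind

theorem IsQuantumMatrix.wedge_mul_self {R : Type*} [Preorder R] {X : Matrix R C A}
    (hX : IsQuantumMatrix q X) (i : R) : wedge (-⅟q) (X i) * wedge (-⅟q) (X i) = 0 := by
  rw [wedge_mul_wedge_eq_smul _ 0 (v' := X i) (w' := X i) fun j l hjl => ?_, zero_smul]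
  rw [hX.row i hjl]
  module

end QuantumMatrix

theorem map_univ_erase {s : ℕ} (col : Fin (s + 1) ↪o C) (j : Fin (s + 1)) :
    (Finset.univ.map col.toEmbedding).erase (col j) =
      Finset.univ.map (j.succAboveOrderEmb.trans col).toEmbedding := by
  have := Finset.map_erase col.toEmbedding Finset.univ j
  rw [RelEmbedding.coe_toEmbedding] at this
  rw [← this, ← Finset.compl_singleton, ← Fin.image_succAbove_univ,
    ← Fin.coe_succAboveEmb, ← Finset.map_eq_image]
  exact Finset.map_map ..

theorem qdet_submatrix_eq_prod_wedge (q : K) [Invertible q] {s : ℕ} (X : Matrix (Fin s) C A)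
    (col : Fin s ↪o C) :
    qdet q (X.submatrix id col) =
      (List.ofFn fun i => wedge (-⅟q) (X i)).prod vacuum (Finset.univ.map col.toEmbedding) := by
  induction s with
  | zero => simp [qdet, vacuum, inversions]
  | succ s ih =>
    have card_below (j : Fin (s + 1)) :
        ((Finset.univ.map col.toEmbedding).filter (· < col j)).card = j := by
      simp [Finset.filter_map, Finset.filter_gt_eq_Iio]
    rw [qdet_succ_row_zero, List.ofFn_succ, List.prod_cons, Module.End.mul_apply, wedge_apply,
      Finset.sum_map]
    refine Finset.sum_congr rfl fun j _ => ?_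
    rw [RelEmbedding.coe_toEmbedding, card_below, map_univ_erase]
    exact congrArg (fun d => _ • (X 0 (col j) * d))
      (ih (X.submatrix Fin.succ id) (j.succAboveOrderEmb.trans col))

end ExteriorAlgebra

section Condensation

variable {K A R C : Type*} [CommRing K] [Ring A] [Algebra K A] {q : K} [Invertible q]

/-- The matrix of `2 × 2` quantum minors of `X` on the rows `p < i` and the columns `c < j`; only
the entries in such positions are meaningful. -/
def condensation (q : K) [Invertible q] (X : Matrix R C A) (p : R) (c : C) : Matrix R C A :=
  Matrix.of fun i j => X p c * X i j - ⅟q • (X i c * X p j)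

variable {X : Matrix R C A} {p i k : R} {c j l : C}

theorem condensation_mul (a : A) :
    condensation q X p c i j * a = X p c * (X i j * a) - ⅟q • (X i c * (X p j * a)) := by
  simp only [condensation, Matrix.of_apply, sub_mul, smul_mul_assoc, mul_assoc]

theorem mul_condensation (a : A) :
    a * condensation q X p c i j = a * X p c * X i j - ⅟q • (a * X i c * X p j) := by
  simp only [condensation, Matrix.of_apply, mul_sub, mul_smul_comm, mul_assoc]

theorem pivot_mul_apply :
    X p c * X i j = condensation q X p c i j + ⅟q • (X i c * X p j) :=
  (sub_add_cancel ..).symm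

namespace IsQuantumMatrix

variable [Preorder R] [Preorder C] (hX : IsQuantumMatrix q X)
include hX

theorem apply_mul_pivot (hi : p < i) (hj : c < j) :
    X i j * X p c = condensation q X p c i j + q • (X i c * X p j) := by
  rw [condensation, Matrix.of_apply, hX.qcomm_eq hi hj]
  module

theorem pivot_mul_condensation (hi : p < i) (hj : c < j) :
    X p c * condensation q X p c i j = condensation q X p c i j * X p c := by
  rw [mul_condensation, condensation_mul, mul_assoc, hX.apply_mul_pivot hi hj, hX.row_rev p hj,
    hX.col c hi, pivot_mul_apply (q := q) (i := i)]
  simp only [mul_add, mul_smul_comm, smul_mul_assoc, ← mul_assoc, hX.col c hi]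
  match_scalars <;> grind

theorem pivot_row_mul_condensation_of_eq (hi : p < i) (hj : c < j) :
    X p j * condensation q X p c i j = condensation q X p c i j * X p j := by
  rw [mul_condensation, condensation_mul, hX.row_rev p hj, hX.comm hi hj, smul_mul_assoc,
    mul_assoc, hX.col j hi, mul_smul_comm, smul_smul, mul_invOf_self, one_smul, mul_assoc]

theorem pivot_row_mul_condensation_of_gt (hi : p < i) (hj : c < j) (hjl : j < l) :
    X p l * condensation q X p c i j = q • (condensation q X p c i j * X p l) := by
  have hl := hj.trans hjl
  rw [mul_condensation, condensation_mul, hX.row_rev p hl, hX.comm hi hl, smul_mul_assoc,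
    mul_assoc, hX.comm hi hjl, mul_assoc, hX.row_rev p hjl, mul_smul_comm, smul_sub,
    smul_comm (⅟q) q]

theorem pivot_row_mul_condensation_of_lt (hi : p < i) (hl : c < l) (hlj : l < j) :
    X p l * condensation q X p c i j = q • (condensation q X p c i j * X p l) +
      (q * (⅟q - q)) • (condensation q X p c i l * X p j) := by
  have hq := mul_invOf_self q
  rw [mul_condensation, condensation_mul, condensation_mul, hX.row_rev p hl, hX.comm hi hl,
    smul_mul_assoc, mul_assoc, hX.qcomm_eq hi hlj, mul_assoc, hX.row p hlj, mul_add]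
  simp only [mul_smul_comm]
  match_scalars <;> grind

theorem condensation_transpose (hi : p < i) (hj : c < j) :
    condensation q X.transpose c p j i = condensation q X p c i j := by
  simp only [condensation, Matrix.of_apply, Matrix.transpose_apply, hX.comm hi hj]

theorem condensation_mul_pivot_col_of_eq (hi : p < i) (hj : c < j) :
    condensation q X p c i j * X i c = X i c * condensation q X p c i j := by
  rw [← hX.condensation_transpose hi hj]
  exact (hX.transpose.pivot_row_mul_condensation_of_eq hj hi).symm

theorem condensation_mul_pivot_col_of_gt (hi : p < i) (hj : c < j) (hik : i < k) :
    condensation q X p c i j * X k c = ⅟q • (X k c * condensation q X p c i j) := by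
  rw [← hX.condensation_transpose hi hj]
  have h := hX.transpose.pivot_row_mul_condensation_of_gt hj hi hik
  rw [Matrix.transpose_apply] at h
  rw [h, smul_smul, invOf_mul_self, one_smul]

theorem condensation_mul_pivot_col_of_lt (hk : p < k) (hj : c < j) (hki : k < i) :
    condensation q X p c i j * X k c = ⅟q • (X k c * condensation q X p c i j) -
      (⅟q * (⅟q - q)) • (X i c * condensation q X p c k j) := by
  have hq := mul_invOf_self q
  have h := hX.transpose.pivot_row_mul_condensation_of_lt hj hk hki
  rw [hX.condensation_transpose (hk.trans hki) hj, hX.condensation_transpose hk hj,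
    Matrix.transpose_apply, Matrix.transpose_apply,
    hX.condensation_mul_pivot_col_of_gt hk hj hki] at h
  rw [h]
  match_scalars <;> grind

theorem pivot_mul_mul_mul_pivot (hj : c < j) (hk : p < k) (hl : c < l) :
    X p c * (X i j * X k l) * X p c =
      condensation q X p c i j * condensation q X p c k l +
      q • (condensation q X p c i j * X k c * X p l) +
      ⅟q • (X i c * (X p j * condensation q X p c k l)) +
      X i c * X k c * (X p j * X p l) := by
  have hq := mul_invOf_self q
  have swap : X i c * X k c * (X p j * X p l) = X i c * (X p j * X k c) * X p l := by
    rw [hX.comm hk hj]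
    simp only [mul_assoc]
  rw [swap, ← mul_assoc, mul_assoc (X p c * X i j), pivot_mul_apply (q := q),
    hX.apply_mul_pivot hk hl]
  simp only [mul_add, add_mul, mul_smul_comm, smul_mul_assoc, mul_assoc]
  match_scalars <;> grind

theorem condensation_row (hi : p < i) (hj : c < j) (hjl : j < l) :
    condensation q X p c i j * condensation q X p c i l =
      ⅟q • (condensation q X p c i l * condensation q X p c i j) := by
  have hq := mul_invOf_self q
  have hl := hj.trans hjl
  have h := congrArg (X p c * · * X p c) (hX.row i hjl)
  simp only [mul_smul_comm, smul_mul_assoc] at h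
  rw [hX.pivot_mul_mul_mul_pivot hj hi hl, hX.pivot_mul_mul_mul_pivot hl hi hj,
    hX.condensation_mul_pivot_col_of_eq hi hj, hX.condensation_mul_pivot_col_of_eq hi hl,
    hX.pivot_row_mul_condensation_of_gt hi hj hjl, hX.pivot_row_mul_condensation_of_lt hi hj hjl,
    hX.row p hjl] at h
  simp only [mul_add, mul_smul_comm, mul_assoc] at h
  linear_combination (norm := (match_scalars <;> grind)) h

theorem condensation_comm (hi : p < i) (hik : i < k) (hl : c < l) (hlj : l < j) :
    condensation q X p c i j * condensation q X p c k l =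
      condensation q X p c k l * condensation q X p c i j := by
  have hk := hi.trans hik
  have hj := hl.trans hlj
  have h : X p c * (X i j * X k l) * X p c = X p c * (X k l * X i j) * X p c := by
    rw [hX.comm hik hlj]
  rw [hX.pivot_mul_mul_mul_pivot hj hk hl, hX.pivot_mul_mul_mul_pivot hl hi hj,
    hX.condensation_mul_pivot_col_of_gt hi hj hik, hX.condensation_mul_pivot_col_of_lt hi hl hik,
    hX.pivot_row_mul_condensation_of_gt hk hl hlj, hX.pivot_row_mul_condensation_of_lt hi hl hlj,
    hX.row p hlj, hX.col c hik] at h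
  simp only [sub_mul, mul_add, mul_smul_comm, smul_mul_assoc, mul_assoc] at h
  linear_combination (norm := (match_scalars <;> grind)) h

theorem condensation_qcomm (hi : p < i) (hik : i < k) (hj : c < j) (hjl : j < l) :
    condensation q X p c i j * condensation q X p c k l -
        condensation q X p c k l * condensation q X p c i j =
      (⅟q - q) • (condensation q X p c k j * condensation q X p c i l) := by
  have hq := mul_invOf_self q
  have hk := hi.trans hik
  have hl := hj.trans hjl
  have h := congrArg (X p c * · * X p c) (hX.qcomm_eq hik hjl)
  simp only [mul_add, add_mul, mul_smul_comm, smul_mul_assoc] at h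
  rw [hX.pivot_mul_mul_mul_pivot hj hk hl, hX.pivot_mul_mul_mul_pivot hl hi hj,
    hX.pivot_mul_mul_mul_pivot hj hi hl,
    hX.condensation_mul_pivot_col_of_gt hi hj hik, hX.condensation_mul_pivot_col_of_lt hi hl hik,
    hX.condensation_mul_pivot_col_of_lt hi hj hik,
    hX.pivot_row_mul_condensation_of_lt hk hj hjl, hX.pivot_row_mul_condensation_of_gt hi hj hjl,
    hX.pivot_row_mul_condensation_of_lt hi hj hjl, hX.row p hjl, hX.col c hik] at h
  simp only [sub_mul, mul_add, mul_smul_comm, smul_mul_assoc, mul_assoc] at h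
  linear_combination (norm := (match_scalars <;> grind)) h

theorem condensation_submatrix {R' C' : Type*} [Preorder R'] [Preorder C'] {f : R' → R}
    {g : C' → C} (hf : StrictMono f) (hg : StrictMono g) (hpf : ∀ i, p < f i)
    (hcg : ∀ j, c < g j) : IsQuantumMatrix q ((condensation q X p c).submatrix f g) where
  col i k j h := by
    have := hX.transpose.condensation_row (hcg j) (hpf i) (hf h)
    simpa only [Matrix.submatrix_apply, hX.condensation_transpose (hpf _) (hcg j)] using this
  row i _ _ h := hX.condensation_row (hpf i) (hcg _) (hg h)
  comm _ _ _ _ h h' := hX.condensation_comm (hpf _) (hf h) (hcg _) (hg h')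
  qcomm _ _ _ _ h h' := hX.condensation_qcomm (hpf _) (hf h) (hcg _) (hg h')

end IsQuantumMatrix

end Condensation

section Sylvester

section Ring

variable {K E : Type*} [CommRing K] [Ring E] [Algebra K E] {s : ℕ} {W : Fin s → E} {w : E}

theorem mul_prod_ofFn_of_mul_eq_smul {c : K} (hw : ∀ i, w * W i = c • (W i * w)) :
    w * (List.ofFn W).prod = c ^ s • ((List.ofFn W).prod * w) := by
  induction s with
  | zero => simp
  | succ s ih =>
    rw [List.ofFn_succ, List.prod_cons, ← mul_assoc, hw, smul_mul_assoc, mul_assoc (W 0),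
      ih fun i => hw i.succ, mul_smul_comm, smul_smul, ← pow_succ', mul_assoc]

theorem pow_mul_prod_ofFn_mul {c : K} {x : E} {V β : Fin s → E}
    (hx : ∀ i, x * W i = V i * w + β i) (hβ : ∀ i, Commute x (β i))
    (hw : ∀ i, w * W i = c • (W i * w)) (hww : w * w = 0) :
    x ^ s * (List.ofFn W).prod * w = (List.ofFn β).prod * w := by
  induction s with
  | zero => simp
  | succ s ih =>
    set P := (List.ofFn fun i : Fin s => W i.succ).prod
    have hwP : w * P * w = 0 := by
      rw [mul_prod_ofFn_of_mul_eq_smul fun i => hw i.succ, smul_mul_assoc, mul_assoc, hww, mul_zero,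
        smul_zero]
    calc
      x ^ (s + 1) * (List.ofFn W).prod * w = x ^ s * (x * W 0) * P * w := by
        simp only [List.ofFn_succ, List.prod_cons, pow_succ, mul_assoc, P]
      _ = x ^ s * V 0 * (w * P * w) + x ^ s * β 0 * P * w := by
        rw [hx]; simp only [mul_add, add_mul, mul_assoc]
      _ = β 0 * (x ^ s * P * w) := by
        rw [hwP, mul_zero, zero_add, ((hβ 0).pow_left s).eq]; simp only [mul_assoc]
      _ = (List.ofFn β).prod * w := by
        rw [ih (fun i => hx i.succ) (fun i => hβ i.succ) (fun i => hw i.succ), List.ofFn_succ,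
          List.prod_cons, mul_assoc]

end Ring

variable {K A C : Type*} [CommRing K] [Ring A] [Algebra K A] [LinearOrder C]

theorem lsmul_mul_wedge (ν : K) (a : A) (v : C → A) :
    Algebra.lsmul K K (Finset C → A) a * wedge ν v = wedge ν (a • v) := by
  refine LinearMap.ext fun f => funext fun S => ?_
  simp [wedge_apply, Finset.mul_sum, mul_assoc]

theorem commute_lsmul_wedge (ν : K) {a : A} {v : C → A} (h : ∀ j, Commute a (v j)) :
    Commute (Algebra.lsmul K K (Finset C → A) a) (wedge ν v) := by
  refine LinearMap.ext fun f => funext fun S => ?_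
  simp [wedge_apply, Finset.mul_sum, ← mul_assoc, (h _).eq]

theorem commute_lsmul_op_wedge (ν : K) (a : A) (v : C → A) :
    Commute (Algebra.lsmul K K (Finset C → A) (MulOpposite.op a)) (wedge ν v) := by
  refine LinearMap.ext fun f => funext fun S => ?_
  simp [wedge_apply, Finset.sum_mul, mul_assoc]

/-- The coefficient of `ξ_0` in an element of the quantum exterior algebra on `ξ_0, …, ξ_n`, as an
element of the quantum exterior algebra on `ξ_1, …, ξ_n`. -/
def leadCoeff (K A : Type*) [CommRing K] [Ring A] [Algebra K A] (n : ℕ) :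
    (Finset (Fin (n + 1)) → A) →ₗ[K] (Finset (Fin n) → A) :=
  LinearMap.funLeft K A fun S => insert 0 (S.map (Fin.succEmb n))

variable {n : ℕ}

theorem leadCoeff_apply (f : Finset (Fin (n + 1)) → A) (S : Finset (Fin n)) :
    leadCoeff K A n f S = f (insert 0 (S.map (Fin.succEmb n))) :=
  rfl

theorem leadCoeff_wedge_cons_zero (ν : K) (v : Fin n → A) (f : Finset (Fin (n + 1)) → A) :
    leadCoeff K A n (wedge ν (Fin.cons 0 v : Fin (n + 1) → A) f) =
      ν • wedge ν v (leadCoeff K A n f) := by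
  funext S
  have zero_notMem (T : Finset (Fin n)) : (0 : Fin (n + 1)) ∉ T.map (Fin.succEmb n) := by simp
  rw [leadCoeff_apply, wedge_apply, Finset.sum_insert (zero_notMem S), Finset.sum_map,
    Pi.smul_apply, wedge_apply, Finset.smul_sum]
  simp only [Fin.cons_zero, zero_mul, smul_zero, zero_add, leadCoeff_apply]
  refine Finset.sum_congr rfl fun j _ => ?_
  have card_below : ((insert 0 (S.map (Fin.succEmb n))).filter (· < Fin.succEmb n j)).card =
      (S.filter (· < j)).card + 1 := by
    rw [Finset.filter_insert, if_pos (by simp), Finset.filter_map,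
      Finset.card_insert_of_notMem (zero_notMem _), Finset.card_map]
    simp [Function.comp_def]
  rw [card_below, pow_succ', mul_smul, Fin.coe_succEmb, Fin.cons_succ,
    Finset.erase_insert_of_ne (Fin.succ_ne_zero j).symm, ← Fin.coe_succEmb, ← Finset.map_erase]

theorem leadCoeff_prod_wedge_cons_zero (ν : K) {s : ℕ} (v : Fin s → Fin n → A)
    (f : Finset (Fin (n + 1)) → A) :
    leadCoeff K A n ((List.ofFn fun i => wedge ν (Fin.cons 0 (v i) : Fin (n + 1) → A)).prod f) =
      ν ^ s • (List.ofFn fun i => wedge ν (v i)).prod (leadCoeff K A n f) := by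
  induction s with
  | zero => simp
  | succ s ih =>
    simp only [List.ofFn_succ, List.prod_cons, Module.End.mul_apply, leadCoeff_wedge_cons_zero, ih,
      map_smul, smul_smul, pow_succ']

theorem leadCoeff_wedge_vacuum (ν : K) (v : Fin (n + 1) → A) :
    leadCoeff K A n (wedge ν v vacuum) =
      Algebra.lsmul K K (Finset (Fin n) → A) (MulOpposite.op (v 0)) vacuum := by
  funext S
  rcases S.eq_empty_or_nonempty with rfl | hS
  · simp [leadCoeff_apply, wedge_apply, vacuum]
  · have hS' (j : Fin (n + 1)) : (insert 0 (S.map (Fin.succEmb n))).erase j ≠ ∅ := by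
      obtain ⟨t, ht⟩ := hS
      cases j using Fin.cases with
      | zero => exact Finset.ne_empty_of_mem (a := t.succ) (by simp [ht])
      | succ j => exact Finset.ne_empty_of_mem (a := 0) (by simp [(Fin.succ_ne_zero j).symm])
    simp [leadCoeff_apply, wedge_apply, vacuum, hS.ne_empty, hS']

variable {q : K} [Invertible q]

theorem IsQuantumMatrix.pivot_mul_wedge {X : Matrix (Fin (n + 1)) (Fin (n + 1)) A}
    (hX : IsQuantumMatrix q X) (i : Fin n) :
    Algebra.lsmul K K _ (X 0 0) * wedge (-⅟q) (X i.succ) =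
      Algebra.lsmul K K _ (⅟q • X i.succ 0) * wedge (-⅟q) (X 0) +
        wedge (-⅟q) (Fin.cons 0 fun j => condensation q X 0 0 i.succ j.succ) := by
  rw [lsmul_mul_wedge, lsmul_mul_wedge, ← map_add]
  congr 1
  funext j
  cases j using Fin.cases with
  | zero => simp [hX.col 0 i.succ_pos]
  | succ j => simpa [add_comm] using pivot_mul_apply (q := q)

theorem IsQuantumMatrix.pivot_pow_mul_prod_wedge {s : ℕ} {X : Matrix (Fin (s + 1)) (Fin (s + 1)) A}
    (hX : IsQuantumMatrix q X) :
    Algebra.lsmul K K _ (X 0 0 ^ s) *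
        (wedge (-⅟q) (X 0) * (List.ofFn fun i : Fin s => wedge (-⅟q) (X i.succ)).prod) =
      (-q) ^ s • ((List.ofFn fun i : Fin s => wedge (-⅟q)
        (Fin.cons 0 fun j => condensation q X 0 0 i.succ j.succ : Fin (s + 1) → A)).prod *
          wedge (-⅟q) (X 0)) := by
  have swap (i : Fin s) := hX.wedge_mul_wedge i.succ_pos
  rw [mul_prod_ofFn_of_mul_eq_smul (c := -q) swap, mul_smul_comm, ← mul_assoc, map_pow,
    pow_mul_prod_ofFn_mul (c := -q) hX.pivot_mul_wedge (fun i => commute_lsmul_wedge _ ?_) swap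
      (hX.wedge_mul_self 0)]
  exact Fin.cases (Commute.zero_right _) fun j => hX.pivot_mul_condensation i.succ_pos j.succ_pos

theorem IsQuantumMatrix.pivot_pow_mul_qdet {s : ℕ} {X : Matrix (Fin (s + 1)) (Fin (s + 1)) A}
    (hX : IsQuantumMatrix q X) :
    X 0 0 ^ s * qdet q X =
      qdet q ((condensation q X 0 0).submatrix Fin.succ Fin.succ) * X 0 0 := by
  set B := (condensation q X 0 0).submatrix Fin.succ Fin.succ
  set w := wedge (-⅟q) (X 0)
  set P := (List.ofFn fun i : Fin s => wedge (-⅟q) (X i.succ)).prod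
  set Q := (List.ofFn fun i : Fin s => wedge (-⅟q) (B i)).prod
  have hX_det : qdet q X = (w * P) vacuum Finset.univ := by
    simpa [List.ofFn_succ] using qdet_submatrix_eq_prod_wedge q X (RelEmbedding.refl _)
  have hB_det : qdet q B = Q vacuum Finset.univ := by
    simpa using qdet_submatrix_eq_prod_wedge q B (RelEmbedding.refl _)
  have univ_eq : (Finset.univ : Finset (Fin (s + 1))) =
      insert 0 (Finset.univ.map (Fin.succEmb s)) := by
    ext j; cases j using Fin.cases <;> simp
  have hQ_comm : Commute (Algebra.lsmul K K (Finset (Fin s) → A) (MulOpposite.op (X 0 0))) Q :=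
    Commute.list_prod_right _ _ (List.forall_mem_ofFn_iff.2 fun i => commute_lsmul_op_wedge ..)
  calc
    X 0 0 ^ s * qdet q X = (Algebra.lsmul (A := A) K K (Finset (Fin (s + 1)) → A) (X 0 0 ^ s) *
        (w * P)) vacuum Finset.univ := by rw [hX_det]; rfl
    _ = (-q) ^ s • leadCoeff K A s ((List.ofFn fun i : Fin s => wedge (-⅟q)
          (Fin.cons 0 (B i) : Fin (s + 1) → A)).prod (w vacuum)) Finset.univ := by
      rw [hX.pivot_pow_mul_prod_wedge, leadCoeff_apply, ← univ_eq]; rfl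
    _ = ((-q) ^ s * (-⅟q) ^ s) • Q (leadCoeff K A s (w vacuum)) Finset.univ := by
      rw [mul_smul]
      exact congrArg (fun g => (-q) ^ s • g Finset.univ)
        (leadCoeff_prod_wedge_cons_zero (-⅟q) B (w vacuum))
    _ = Q (Algebra.lsmul K K _ (MulOpposite.op (X 0 0)) vacuum) Finset.univ := by
      rw [← mul_pow, neg_mul_neg, mul_invOf_self, one_pow, one_smul, leadCoeff_wedge_vacuum]
    _ = qdet q B * X 0 0 := by
      rw [← Module.End.mul_apply, ← hQ_comm.eq, hB_det]; rfl

end Sylvester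

section UniversalProperty

theorem qParam_mul_qInv (k : Type) [Field k] : qParam k * qInv k = 1 := by
  rw [qParam, qInv, ← LaurentPolynomial.T_add, add_neg_cancel, LaurentPolynomial.T_zero]

instance invertibleQParam (k : Type) [Field k] : Invertible (qParam k) :=
  ⟨qInv k, (mul_comm _ _).trans (qParam_mul_qInv k), qParam_mul_qInv k⟩

theorem invOf_qParam (k : Type) [Field k] : ⅟(qParam k) = qInv k :=
  rfl

theorem qCoeff_eq_pow (k : Type) [Field k] (l : ℕ) : qCoeff k l = (-⅟(qParam k)) ^ l := by
  rw [invOf_qParam, qInv, neg_pow, LaurentPolynomial.T_pow, mul_neg_one, qCoeff]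

variable {k : Type} [Field k] {R C : Type} [LinearOrder R] [LinearOrder C]

theorem qMinorG_eq_qdet {s : ℕ} (row : Fin s → R) (col : Fin s → C) :
    qMinorG k R C s row col = qdet (qParam k) ((Matrix.of (qgen k R C)).submatrix row col) := by
  simp only [qMinorG, qdet, qCoeff_eq_pow, Matrix.submatrix_apply, Matrix.of_apply]

theorem isQuantumMatrix_qgen : IsQuantumMatrix (qParam k) (Matrix.of (qgen k R C)) where
  col i i' j h := by
    simpa [qgen, invOf_qParam] using RingQuot.mkAlgHom_rel (kq k) (QMRel.col (k := k) i i' j h)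
  row i j j' h := by
    simpa [qgen, invOf_qParam] using RingQuot.mkAlgHom_rel (kq k) (QMRel.row (k := k) i j j' h)
  comm i i' j j' h h' := by
    simpa [qgen, invOf_qParam] using
      RingQuot.mkAlgHom_rel (kq k) (QMRel.comm (k := k) i i' j j' h h')
  qcomm i i' j j' h h' := by
    simpa [qgen, invOf_qParam] using
      RingQuot.mkAlgHom_rel (kq k) (QMRel.qcomm (k := k) i i' j j' h h')

variable {A : Type*} [Ring A] [Algebra (kq k) A]

/-- The algebra homomorphism out of the quantum matrix algebra that sends the generic quantum matrix
to a given one. -/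
def IsQuantumMatrix.lift {X : Matrix R C A} (hX : IsQuantumMatrix (qParam k) X) :
    QMatG k R C →ₐ[kq k] A :=
  RingQuot.liftAlgHom (kq k) ⟨FreeAlgebra.lift (kq k) fun p : R × C => X p.1 p.2, by
    intro a b h
    cases h with
    | col i i' j h => simpa [invOf_qParam] using hX.col j h
    | row i j j' h => simpa [invOf_qParam] using hX.row i h
    | comm i i' j j' h h' => simpa using hX.comm h h'
    | qcomm i i' j j' h h' => simpa [invOf_qParam] using hX.qcomm h h'⟩

theorem IsQuantumMatrix.lift_qgen {X : Matrix R C A} (hX : IsQuantumMatrix (qParam k) X) (i : R)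
    (j : C) : hX.lift (qgen k R C i j) = X i j := by
  rw [lift, qgen, RingQuot.liftAlgHom_mkAlgHom_apply, FreeAlgebra.lift_ι_apply]

theorem IsQuantumMatrix.lift_qMinorG {X : Matrix R C A} (hX : IsQuantumMatrix (qParam k) X) {s : ℕ}
    (row : Fin s → R) (col : Fin s → C) :
    hX.lift (qMinorG k R C s row col) = qdet (qParam k) (X.submatrix row col) := by
  rw [qMinorG_eq_qdet]
  refine (map_qdet (K := kq k) (A := QMatG k R C) hX.lift (qParam k) _).trans
    (congrArg _ (Matrix.ext fun i j => ?_))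
  exact hX.lift_qgen _ _

theorem adjoin_range_qgen :
    Algebra.adjoin (kq k) (Set.range fun p : R × C => qgen k R C p.1 p.2) = ⊤ := by
  change Algebra.adjoin (kq k)
    (Set.range (RingQuot.mkAlgHom (kq k) (QMRel k R C) ∘ FreeAlgebra.ι (kq k))) = ⊤
  rw [Set.range_comp, ← AlgHom.map_adjoin, FreeAlgebra.adjoin_range_ι, Algebra.map_top,
    AlgHom.range_eq_top]
  exact RingQuot.mkAlgHom_surjective _ _

theorem algHom_ext_qgen {φ ψ : QMatG k R C →ₐ[kq k] A}
    (h : ∀ i j, φ (qgen k R C i j) = ψ (qgen k R C i j)) : φ = ψ :=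
  AlgHom.ext_of_adjoin_eq_top adjoin_range_qgen <| by
    rintro _ ⟨p, rfl⟩
    exact h p.1 p.2

end UniversalProperty

section Regularity

theorem IsQuantumMatrix.add_single {K A R C : Type*} [CommRing K] [Ring A] [Algebra K A]
    [Preorder R] [Preorder C] [DecidableEq R] [DecidableEq C] {q : K} [Invertible q]
    {X : Matrix R C A} (hX : IsQuantumMatrix q X) {p : R} {c : C} (hp : IsBot p) (hc : IsBot c)
    {s : A} (hcol : ∀ ⦃i⦄, p < i → s * X i c = ⅟q • (X i c * s))
    (hrow : ∀ ⦃j⦄, c < j → s * X p j = ⅟q • (X p j * s))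
    (hcomm : ∀ ⦃i j⦄, p < i → c < j → Commute s (X i j)) :
    IsQuantumMatrix q (X + Matrix.single p c s) := by
  have row_ne {i i' : R} (h : i < i') : p ≠ i' := fun e => (hp i).not_gt (e ▸ h)
  have col_ne {j j' : C} (h : j < j') : c ≠ j' := fun e => (hc j).not_gt (e ▸ h)
  constructor
  · intro i i' j h
    simp only [Matrix.add_apply, Matrix.single_apply_of_row_ne (row_ne h), add_zero, add_mul,
      mul_add, smul_add, hX.col j h, Matrix.single_apply]
    split_ifs with hij
    · obtain ⟨rfl, rfl⟩ := hij
      rw [hcol h]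
    · simp
  · intro i j j' h
    simp only [Matrix.add_apply, Matrix.single_apply_of_col_ne _ _ (col_ne h), add_zero, add_mul,
      mul_add, smul_add, hX.row i h, Matrix.single_apply]
    split_ifs with hij
    · obtain ⟨rfl, rfl⟩ := hij
      rw [hrow h]
    · simp
  · intro i i' j j' h h'
    simpa only [Matrix.add_apply, Matrix.single_apply_of_row_ne (row_ne h),
      Matrix.single_apply_of_col_ne _ _ (col_ne h'), add_zero] using hX.comm h h'
  · intro i i' j j' h h'
    simp only [Matrix.add_apply, Matrix.single_apply_of_row_ne (row_ne h),
      Matrix.single_apply_of_col_ne _ _ (col_ne h'), add_zero, add_mul, mul_add, hX.qcomm_eq h h',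
      Matrix.single_apply]
    split_ifs with hij
    · obtain ⟨rfl, rfl⟩ := hij
      rw [(hcomm h h').eq]
      abel
    · simp

section TwistedShift

open Polynomial

variable {K A : Type*} [CommSemiring K] [Semiring A] [Algebra K A]

/-- The twisted shift `a Tⁿ ↦ σ(a) Tⁿ⁺¹` of the polynomials in `T` over `A`. -/
def twistedShift (σ : A →ₐ[K] A) : Module.End K A[X] :=
  (LinearMap.mulRight K X).comp (mapAlgHom σ).toLinearMap

theorem twistedShift_apply (σ : A →ₐ[K] A) (f : A[X]) :
    twistedShift σ f = f.map (σ : A →+* A) * X :=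
  rfl

theorem twistedShift_mul_lmul (σ : A →ₐ[K] A) (a : A) :
    twistedShift σ * Algebra.lmul K A[X] (C a) = Algebra.lmul K A[X] (C (σ a)) * twistedShift σ :=
  LinearMap.ext fun f => by simp [twistedShift_apply, mul_assoc]

theorem coeff_zero_twistedShift (σ : A →ₐ[K] A) (f : A[X]) : (twistedShift σ f).coeff 0 = 0 :=
  coeff_mul_X_zero _

theorem eq_zero_of_C_mul_add_twistedShift_eq_zero {σ : A →ₐ[K] A} (hσ : Function.Injective σ)
    {a : A} {f : A[X]} (h : C a * f + twistedShift σ f = 0) : f = 0 := by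
  have top := congrArg (coeff · (f.natDegree + 1)) h
  simp only [twistedShift_apply, coeff_add, coeff_C_mul, coeff_mul_X, coeff_map, coeff_zero,
    coeff_eq_zero_of_natDegree_lt (Nat.lt_succ_self _), mul_zero, zero_add] at top
  exact leadingCoeff_eq_zero.1 ((map_eq_zero_iff σ hσ).1 top)

theorem coeff_zero_apply_of_adjoin_eq_top {Θ : A →ₐ[K] Module.End K A[X]} {s : Set A}
    (hs : Algebra.adjoin K s = ⊤) (hΘ : ∀ a ∈ s, ∀ f, (Θ a f).coeff 0 = a * f.coeff 0) (a : A)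
    (f : A[X]) : (Θ a f).coeff 0 = a * f.coeff 0 := by
  have ha : a ∈ Algebra.adjoin K s := hs ▸ Algebra.mem_top
  induction ha using Algebra.adjoin_induction generalizing f with
  | mem a ha => exact hΘ a ha f
  | algebraMap r => simp [Algebra.smul_def]
  | add a b _ _ ha hb => simp [ha, hb, add_mul]
  | mul a b _ _ ha hb => simp [ha, hb, mul_assoc]

end TwistedShift

section TwistedPivot

open scoped Polynomial

variable {K A R C : Type*} [CommRing K] [Ring A] [Algebra K A] [DecidableEq R] [DecidableEq C]

/-- The matrix of operators on `A[T]` by which the entries of `X` act as left multiplications,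
perturbed at the pivot by a twisted shift. -/
def twistedPivot (X : Matrix R C A) (p : R) (c : C) (σ : A →ₐ[K] A) :
    Matrix R C (Module.End K A[X]) :=
  X.map ((Algebra.lmul K A[X]).comp Polynomial.CAlgHom) + Matrix.single p c (twistedShift σ)

variable {X : Matrix R C A} {p : R} {c : C} {σ : A →ₐ[K] A}

theorem twistedPivot_pivot_apply (f : A[X]) :
    twistedPivot X p c σ p c f = Polynomial.C (X p c) * f + twistedShift σ f := by
  simp [twistedPivot]

theorem coeff_zero_twistedPivot_apply (i : R) (j : C) (f : A[X]) :
    (twistedPivot X p c σ i j f).coeff 0 = X i j * f.coeff 0 := by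
  by_cases h : p = i ∧ c = j
  · simp [twistedPivot, h, coeff_zero_twistedShift]
  · simp [twistedPivot, h]

theorem isLeftRegular_of_apply_eq_twistedPivot (hσ : Function.Injective σ)
    {Θ : A →ₐ[K] Module.End K A[X]} (hΘ : ∀ i j, Θ (X i j) = twistedPivot X p c σ i j)
    (hX : Algebra.adjoin K (Set.range fun ij : R × C => X ij.1 ij.2) = ⊤) :
    IsLeftRegular (X p c) := by
  refine isLeftRegular_of_non_zero_divisor _ fun a ha => ?_
  have Θ_eq_zero : Θ a 1 = 0 := eq_zero_of_C_mul_add_twistedShift_eq_zero hσ <| by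
    rw [← twistedPivot_pivot_apply (X := X) (p := p) (c := c), ← hΘ, ← Module.End.mul_apply,
      ← map_mul, ha, map_zero, LinearMap.zero_apply]
  have coeff_eq : (Θ a 1).coeff 0 = a * (1 : A[X]).coeff 0 := by
    refine coeff_zero_apply_of_adjoin_eq_top hX ?_ a 1
    rintro _ ⟨⟨i, j⟩, rfl⟩ f
    rw [hΘ, coeff_zero_twistedPivot_apply]
  simpa [Θ_eq_zero] using coeff_eq.symm

theorem IsQuantumMatrix.twistedPivot [Preorder R] [Preorder C] {q : K} [Invertible q]
    (hX : IsQuantumMatrix q X) (hp : IsBot p) (hc : IsBot c)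
    (hcol : ∀ ⦃i⦄, p < i → σ (X i c) = ⅟q • X i c)
    (hrow : ∀ ⦃j⦄, c < j → σ (X p j) = ⅟q • X p j)
    (hcomm : ∀ ⦃i j⦄, p < i → c < j → σ (X i j) = X i j) :
    IsQuantumMatrix q (twistedPivot X p c σ) := by
  have twist (i : R) (j : C) := twistedShift_mul_lmul σ (X i j)
  refine (hX.map _).add_single hp hc (fun i hi => (twist i c).trans ?_)
    (fun j hj => (twist p j).trans ?_) fun i j hi hj => (twist i j).trans ?_
  · simp [hcol hi, ← Polynomial.smul_C]
  · simp [hrow hj, ← Polynomial.smul_C]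
  · simp [hcomm hi hj]

end TwistedPivot

variable {k : Type} [Field k] {R C : Type} [LinearOrder R] [LinearOrder C]

theorem exists_injective_scale_qgen (α : R → (kq k)ˣ) (β : C → (kq k)ˣ) :
    ∃ σ : QMatG k R C →ₐ[kq k] QMatG k R C, Function.Injective σ ∧
      ∀ i j, σ (qgen k R C i j) = (α i * β j : kq k) • qgen k R C i j := by
  have scale (α : R → (kq k)ˣ) (β : C → (kq k)ˣ) :=
    (isQuantumMatrix_qgen (k := k)).scale (fun i => (α i : kq k)) fun j => (β j : kq k)
  have inverse : (scale α⁻¹ β⁻¹).lift.comp (scale α β).lift = AlgHom.id (kq k) _ := by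
    refine algHom_ext_qgen (A := QMatG k R C) fun i j => ?_
    have cancel : (α i * β j * (↑(α i)⁻¹ * ↑(β j)⁻¹) : kq k) = 1 := by
      rw [mul_mul_mul_comm, Units.mul_inv, Units.mul_inv, mul_one]
    simp [IsQuantumMatrix.lift_qgen, smul_smul, cancel]
  refine ⟨(scale α β).lift, Function.LeftInverse.injective (DFunLike.congr_fun inverse), ?_⟩
  simp [IsQuantumMatrix.lift_qgen]

theorem isLeftRegular_qgen {p : R} {c : C} (hp : IsBot p) (hc : IsBot c) :
    IsLeftRegular (qgen k R C p c) := by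
  let u := unitOfInvertible (qParam k)
  obtain ⟨σ, σ_injective, hσ⟩ := exists_injective_scale_qgen (k := k)
    (Function.update (1 : R → (kq k)ˣ) p u⁻¹) (Function.update (1 : C → (kq k)ˣ) c u⁻¹)
  have hΘ : IsQuantumMatrix (qParam k)
      (twistedPivot (K := kq k) (A := QMatG k R C) (Matrix.of (qgen k R C)) p c σ) := by
    refine isQuantumMatrix_qgen.twistedPivot hp hc (fun i hi => (hσ i c).trans ?_)
      (fun j hj => (hσ p j).trans ?_) fun i j hi hj => (hσ i j).trans ?_
    · simp [hi.ne', u]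
    · simp [hj.ne', u]
    · simp [hi.ne', hj.ne']
  exact isLeftRegular_of_apply_eq_twistedPivot (A := QMatG k R C) σ_injective hΘ.lift_qgen
    adjoin_range_qgen

end Regularity

section Bordering

section Algebra

theorem exists_algHom_adjoin_range {K B E F ι : Type*} [CommSemiring K] [Semiring B] [Semiring E]
    [Semiring F] [Algebra K B] [Algebra K E] [Algebra K F] (φ : B →ₐ[K] E) {θ : F →ₐ[K] E}
    (hθ : Function.Injective θ) {d : ι → B} {f : ι → F} (h : ∀ i, φ (d i) = θ (f i)) :
    ∃ r : Algebra.adjoin K (Set.range d) →ₐ[K] F,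
      ∀ i, r ⟨d i, Algebra.subset_adjoin ⟨i, rfl⟩⟩ = f i := by
  have mem_range (b : Algebra.adjoin K (Set.range d)) : φ b ∈ θ.range := by
    refine Algebra.adjoin_le (S := θ.range.comap φ) ?_ b.2
    rintro _ ⟨i, rfl⟩
    exact ⟨f i, (h i).symm⟩
  refine ⟨(AlgEquiv.ofInjective θ hθ).symm.toAlgHom.comp
    ((φ.comp (Subalgebra.val _)).codRestrict θ.range mem_range), fun i => ?_⟩
  exact (AlgEquiv.ofInjective θ hθ).toEquiv.symm_apply_eq.2 (Subtype.ext (h i))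

open Polynomial in
theorem injective_eval₂AlgHom_C_mul_X_pow {K A : Type*} [CommSemiring K] [Ring A] [Algebra K A]
    {y : A} (hy : IsLeftRegular y) (hcomm : ∀ a, Commute a y) {n : ℕ} (hn : n ≠ 0)
    (hsubst : ∀ a, Commute (CAlgHom (R := K) a) (C y * X ^ n)) :
    Function.Injective (eval₂AlgHom (CAlgHom (R := K)) (C y * X ^ n) hsubst) := by
  have expand (j : ℕ) (a : A) : C a * (C y * X ^ n) ^ j = C (y ^ j * a) * X ^ (n * j) := by
    rw [(commute_X_pow (C y) n).symm.mul_pow, ← C_pow, ← pow_mul, ← mul_assoc, ← C_mul,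
      ((hcomm a).pow_right j).eq]
  have coeff_eq (f : A[X]) (i : ℕ) :
      (eval₂AlgHom (CAlgHom (R := K)) (C y * X ^ n) hsubst f).coeff (n * i) =
        y ^ i * f.coeff i := by
    change (eval₂ C (C y * X ^ n) f).coeff (n * i) = _
    rw [eval₂_eq_sum, sum_def, finsetSum_coeff]
    simp only [expand, coeff_C_mul_X_pow, Nat.mul_right_inj hn,
      Finset.sum_ite_eq, mem_support_iff]
    simp +contextual
  refine (injective_iff_map_eq_zero _).2 fun f hf => ext fun i => (hy.pow i) ?_
  simpa [hf] using (coeff_eq f i).symm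

end Algebra

section Qdet

variable {K A : Type*} [CommRing K] [Ring A] [Algebra K A] {q : K} [Invertible q] {s : ℕ}

open Polynomial in
theorem qdet_map_C_mul_X (Y : Matrix (Fin s) (Fin s) A) :
    qdet q ((Y.map C).map (· * X)) = C (qdet q Y) * X ^ s := by
  rw [qdet_map_mul_right q _ commute_X]
  exact congrArg (· * X ^ s) (map_qdet (CAlgHom (R := K)) q Y).symm

theorem commute_qdet {a : A} {X : Matrix (Fin s) (Fin s) A} (h : ∀ i j, Commute a (X i j)) :
    Commute a (qdet q X) :=
  Commute.sum_right _ _ _ fun σ _ => (Commute.list_prod_right _ _ <|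
    (List.forall_mem_ofFn_iff (P := Commute a)).2 fun t => h t (σ t)).smul_right _

namespace IsQuantumMatrix

theorem pivot_commute_qdet_condensation {X : Matrix (Fin (s + 1)) (Fin (s + 1)) A}
    (hX : IsQuantumMatrix q X) :
    Commute (X 0 0) (qdet q ((condensation q X 0 0).submatrix Fin.succ Fin.succ)) :=
  commute_qdet fun i j => hX.pivot_mul_condensation i.succ_pos j.succ_pos

theorem pivot_commute_qdet {X : Matrix (Fin (s + 1)) (Fin (s + 1)) A} (hX : IsQuantumMatrix q X)
    (h : IsLeftRegular (X 0 0)) : Commute (X 0 0) (qdet q X) := by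
  refine h.pow s ?_
  change X 0 0 ^ s * (X 0 0 * qdet q X) = X 0 0 ^ s * (qdet q X * X 0 0)
  rw [← mul_assoc, ← pow_succ, pow_succ', mul_assoc, ← mul_assoc _ (qdet q X),
    hX.pivot_pow_mul_qdet, ← mul_assoc, hX.pivot_commute_qdet_condensation.eq]

theorem pivot_pow_mul_qdet_of_isLeftRegular {X : Matrix (Fin (s + 2)) (Fin (s + 2)) A}
    (hX : IsQuantumMatrix q X) (h : IsLeftRegular (X 0 0)) :
    X 0 0 ^ s * qdet q X = qdet q ((condensation q X 0 0).submatrix Fin.succ Fin.succ) := by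
  refine h ?_
  change X 0 0 * (X 0 0 ^ s * qdet q X) = X 0 0 * _
  rw [← mul_assoc, ← pow_succ', hX.pivot_pow_mul_qdet, hX.pivot_commute_qdet_condensation.eq]

end IsQuantumMatrix

end Qdet

variable {k : Type} [Field k] {R C : Type} [LinearOrder R] [LinearOrder C] {A : Type*}
  [Ring A] [Algebra (kq k) A] {ι : Type*} {s : ℕ}

open Polynomial in
/-- The extra variable `T` makes room for the factor `xˢ`: the substitution `T ↦ xˢ Tˢ⁺¹` is
injective and maps `D T` to the image of the minor under the homomorphism `a_{ij} ↦ Y_{ij} T`. -/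
theorem exists_algHom_adjoin_qMinorG_of_pow_mul_eq_qdet {Y : Matrix R C A}
    (hY : IsQuantumMatrix (qParam k) Y) {x : A} (hx : IsLeftRegular x) (hcomm : ∀ a, Commute a x)
    {row : ι → Fin (s + 1) → R} {col : ι → Fin (s + 1) → C} {D : ι → A}
    (hD : ∀ t, x ^ s * D t = qdet (qParam k) (Y.submatrix (row t) (col t))) :
    ∃ r : Algebra.adjoin (kq k) (Set.range fun t => qMinorG k R C (s + 1) (row t) (col t))
        →ₐ[kq k] A,
      ∀ t, r ⟨qMinorG k R C (s + 1) (row t) (col t), Algebra.subset_adjoin ⟨t, rfl⟩⟩ = D t := by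
  have hYT : IsQuantumMatrix (qParam k) ((Y.map Polynomial.C).map (· * X)) :=
    (hY.map (CAlgHom (R := kq k))).mul_central commute_X
  have commute_subst (a : A) :
      Commute (CAlgHom (R := kq k) a) (Polynomial.C (x ^ s) * X ^ (s + 1)) :=
    (((hcomm a).pow_right s).map Polynomial.C).mul_right (commute_X_pow _ _).symm
  have hθ := injective_eval₂AlgHom_C_mul_X_pow (hx.pow s) (fun a => (hcomm a).pow_right s)
    s.succ_ne_zero commute_subst
  let evalOne : A[X] →ₐ[kq k] A := eval₂AlgHom (.id _ A) 1 Commute.one_right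
  have lift_minor (t : ι) : hYT.lift (qMinorG k R C (s + 1) (row t) (col t)) =
      eval₂AlgHom CAlgHom _ commute_subst (Polynomial.C (D t) * X) := by
    calc hYT.lift (qMinorG k R C (s + 1) (row t) (col t))
        = Polynomial.C (qdet (qParam k) (Y.submatrix (row t) (col t))) * X ^ (s + 1) :=
          (hYT.lift_qMinorG _ _).trans (qdet_map_C_mul_X (K := kq k) _)
      _ = Polynomial.C (D t) * (Polynomial.C (x ^ s) * X ^ (s + 1)) := by
          rw [← hD, ← mul_assoc, ← Polynomial.C_mul, ((hcomm _).pow_right s).eq]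
      _ = eval₂AlgHom CAlgHom _ commute_subst (Polynomial.C (D t) * X) :=
          ((eval₂_mul_X _ _).trans (by rw [eval₂_C]; rfl)).symm
  obtain ⟨r, hr⟩ := exists_algHom_adjoin_range hYT.lift hθ lift_minor
  refine ⟨evalOne.comp r, fun t => (congrArg evalOne (hr t)).trans ?_⟩
  exact (eval₂_mul_X _ _).trans ((mul_one _).trans (eval₂_C _ _))

theorem exists_algHom_adjoin_qMinorG_bordered {R' C' : Type*} [Preorder R'] [Preorder C']
    {X : Matrix R' C' A} (hX : IsQuantumMatrix (qParam k) X) {p : R'} {c : C'}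
    (hpc : IsLeftRegular (X p c)) {f : R → R'} (hf : StrictMono f) (hpf : ∀ i, p < f i)
    {g : C → C'} (hg : StrictMono g) (hcg : ∀ j, c < g j)
    {row : ι → Fin (s + 1) → R} (hrow : ∀ t, StrictMono (row t))
    {col : ι → Fin (s + 1) → C} (hcol : ∀ t, StrictMono (col t)) :
    ∃ r : Algebra.adjoin (kq k) (Set.range fun t => qMinorG k R C (s + 1) (row t) (col t))
        →ₐ[kq k] A,
      ∀ t, r ⟨qMinorG k R C (s + 1) (row t) (col t), Algebra.subset_adjoin ⟨t, rfl⟩⟩ =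
        qdet (qParam k)
          (X.submatrix (Fin.cons p (f ∘ row t)) (Fin.cons c (g ∘ col t))) := by
  let Z := Subalgebra.centralizer (kq k) {X p c}
  have mem_Z {a : A} : a ∈ Z ↔ Commute (X p c) a := by
    simp [Z, Subalgebra.mem_centralizer_iff, Commute, SemiconjBy]
  let x : Z := ⟨X p c, mem_Z.2 (.refl _)⟩
  have commute_x (a : Z) : Commute a x := Subtype.ext (mem_Z.1 a.2).eq.symm
  have hx : IsLeftRegular x := fun a b h => Subtype.ext (hpc (congrArg Subtype.val h))
  let Y : Matrix R C Z := Matrix.of fun i j =>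
    ⟨condensation (qParam k) X p c (f i) (g j),
      mem_Z.2 (hX.pivot_mul_condensation (hpf i) (hcg j))⟩
  have hY : IsQuantumMatrix (qParam k) Y :=
    .of_map (φ := Z.val) Subtype.val_injective (hX.condensation_submatrix hf hg hpf hcg)
  let bordered (t : ι) := X.submatrix (Fin.cons p (f ∘ row t)) (Fin.cons c (g ∘ col t))
  have hB (t : ι) : IsQuantumMatrix (qParam k) (bordered t) :=
    hX.submatrix (Fin.strictMono_cons.2 ⟨fun _ => hpf _, hf.comp (hrow t)⟩)
      (Fin.strictMono_cons.2 ⟨fun _ => hcg _, hg.comp (hcol t)⟩)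
  let D (t : ι) : Z := ⟨qdet (qParam k) (bordered t), mem_Z.2 ((hB t).pivot_commute_qdet hpc)⟩
  have hD (t : ι) : x ^ s * D t = qdet (qParam k) (Y.submatrix (row t) (col t)) :=
    Subtype.ext <| ((hB t).pivot_pow_mul_qdet_of_isLeftRegular hpc).trans
      (map_qdet (K := kq k) Z.val (qParam k) (Y.submatrix (row t) (col t))).symm
  obtain ⟨r, hr⟩ := exists_algHom_adjoin_qMinorG_of_pow_mul_eq_qdet hY hx commute_x hD
  exact ⟨Z.val.comp r, fun t => congrArg Z.val (hr t)⟩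

end Bordering

section IndexSets

/-- The index sets `{i₀ < ⋯ < i_{m-1}}` of the maximal quantum minors of `k_q[a]_{m,n}`. -/
structure PluckerIndex (m n : ℕ) where
  rows : Finset ℤ
  card_rows : rows.card = m
  rows_subset : rows ⊆ Finset.Icc (-(m : ℤ)) ((n : ℤ) - 1)

/-- The increasing enumeration of all columns of `k_q[a]_{m,n}`. -/
def fullCol (m : ℕ) (t : Fin m) : ColI m :=
  ⟨-(m : ℤ) + (t : ℕ), Finset.mem_Icc.2 ⟨by omega, by omega⟩⟩

theorem fullCol_strictMono (m : ℕ) : StrictMono (fullCol m) := fun _ _ h =>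
  add_lt_add_right (Int.ofNat_lt.2 h) (-(m : ℤ))

/-- The index of the first column of `k_q[a]_{m+1,n}`. -/
def firstCol (m : ℕ) : ColI (m + 1) :=
  ⟨-((m + 1 : ℕ) : ℤ), Finset.mem_Icc.2 ⟨by omega, by omega⟩⟩

/-- The index of the first row of `k_q[a]_{m+1,n}`. -/
def firstRow (m n : ℕ) : RowI (m + 1) n :=
  ⟨-((m + 1 : ℕ) : ℤ), Finset.mem_Icc.2 ⟨by omega, by omega⟩⟩

theorem isBot_firstCol (m : ℕ) : IsBot (firstCol m) := fun j => (Finset.mem_Icc.1 j.2).1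

theorem isBot_firstRow (m n : ℕ) : IsBot (firstRow m n) := fun i => (Finset.mem_Icc.1 i.2).1

/-- The inclusion of the columns of `k_q[a]_{m,n}` among those of `k_q[a]_{m',n'}`. -/
def colIncl {m m' : ℕ} (hm : m ≤ m') : ColI m → ColI m' :=
  Set.inclusion (Finset.Icc_subset_Icc_left (by omega))

/-- The inclusion of the rows of `k_q[a]_{m,n}` among those of `k_q[a]_{m',n'}`. -/
def rowIncl {m n m' n' : ℕ} (hm : m ≤ m') (hn : n ≤ n') : RowI m n → RowI m' n' :=
  Set.inclusion (Finset.Icc_subset_Icc (by omega) (by omega))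

theorem firstCol_lt_colIncl {m : ℕ} (j : ColI m) : firstCol m < colIncl m.le_succ j :=
  Subtype.coe_lt_coe.1 <| (by omega : -((m + 1 : ℕ) : ℤ) < -m).trans_le (Finset.mem_Icc.1 j.2).1

theorem firstRow_lt_rowIncl {m n : ℕ} (i : RowI m n) :
    firstRow m n < rowIncl m.le_succ le_rfl i :=
  Subtype.coe_lt_coe.1 <| (by omega : -((m + 1 : ℕ) : ℤ) < -m).trans_le (Finset.mem_Icc.1 i.2).1

theorem fullCol_succ (m : ℕ) :
    fullCol (m + 1) = Fin.cons (firstCol m) (colIncl m.le_succ ∘ fullCol m) := by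
  ext t
  refine Fin.cases ?_ (fun t => ?_) t
  · simp [fullCol, firstCol]
  · simp only [fullCol, colIncl, Fin.cons_succ, Function.comp_apply, Fin.val_succ]
    omega

namespace PluckerIndex

variable {m n m' n' : ℕ}

/-- The increasing enumeration of the rows of a maximal minor. -/
def row (I : PluckerIndex m n) (t : Fin m) : RowI m n :=
  ⟨I.rows.orderEmbOfFin I.card_rows t,
    I.rows_subset (I.rows.orderEmbOfFin_mem I.card_rows t)⟩

theorem row_strictMono (I : PluckerIndex m n) : StrictMono I.row :=
  (I.rows.orderEmbOfFin I.card_rows).strictMono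

theorem row_eq_of_strictMono (I : PluckerIndex m n) {f : Fin m → RowI m n}
    (mem : ∀ t, (f t : ℤ) ∈ I.rows) (hf : StrictMono f) : I.row = f :=
  funext fun t => Subtype.ext
    (congrFun (I.rows.orderEmbOfFin_unique I.card_rows mem hf) t).symm

theorem row_mem (I : PluckerIndex m n) (t : Fin m) : (I.row t : ℤ) ∈ I.rows :=
  I.rows.orderEmbOfFin_mem I.card_rows t

/-- The index set obtained by adding the rows `-m', …, -m-1`. -/
def pad (hm : m ≤ m') (hn : n ≤ n') (I : PluckerIndex m n) : PluckerIndex m' n' where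
  rows := Finset.Icc (-(m' : ℤ)) (-(m : ℤ) - 1) ∪ I.rows
  card_rows := by
    have disj : Disjoint (Finset.Icc (-(m' : ℤ)) (-(m : ℤ) - 1)) I.rows :=
      Finset.disjoint_left.2 fun i hi hi' => by
        have := Finset.mem_Icc.1 (I.rows_subset hi')
        have := Finset.mem_Icc.1 hi
        omega
    rw [Finset.card_union_of_disjoint disj, Int.card_Icc, I.card_rows]
    omega
  rows_subset := Finset.union_subset
    (Finset.Icc_subset_Icc le_rfl (by omega))
    (I.rows_subset.trans (Finset.Icc_subset_Icc (by omega) (by omega)))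

theorem row_pad_of_eq (hn : n ≤ n') (I : PluckerIndex m n) :
    (I.pad le_rfl hn).row = rowIncl le_rfl hn ∘ I.row :=
  row_eq_of_strictMono _ (fun t => Finset.mem_union_right _ (I.row_mem t)) I.row_strictMono

theorem row_pad_succ (I : PluckerIndex m n) :
    (I.pad m.le_succ le_rfl).row =
      Fin.cons (firstRow m n) (rowIncl m.le_succ le_rfl ∘ I.row) := by
  refine row_eq_of_strictMono _ (fun t => ?_)
    (Fin.strictMono_cons.2 ⟨fun t => firstRow_lt_rowIncl _, I.row_strictMono⟩)
  refine Fin.cases ?_ (fun t => ?_) t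
  · have le_last : -((m + 1 : ℕ) : ℤ) ≤ -m - 1 := by omega
    exact Finset.mem_union_left _ (Finset.mem_Icc.2 ⟨le_rfl, le_last⟩)
  · exact Finset.mem_union_right _ (I.row_mem t)

theorem pad_pad {m'' n'' : ℕ} (hm : m ≤ m') (hn : n ≤ n') (hm' : m' ≤ m'') (hn' : n' ≤ n'')
    (I : PluckerIndex m n) :
    (I.pad hm hn).pad hm' hn' = I.pad (hm.trans hm') (hn.trans hn') := by
  simp only [pad, mk.injEq]
  ext i
  simp only [Finset.mem_union, Finset.mem_Icc]
  grind

end PluckerIndex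

end IndexSets

section Grassmannian

variable {k : Type} [Field k] {m n m' n' : ℕ}

namespace PluckerIndex

/-- The maximal quantum minor `D_I`. -/
def minor (k : Type) [Field k] (I : PluckerIndex m n) : QMat k m n :=
  qMinorG k (RowI m n) (ColI m) m I.row (fullCol m)

theorem minor_eq_qdet (I : PluckerIndex m n) : I.minor k =
    qdet (qParam k) ((Matrix.of (qgen k (RowI m n) (ColI m))).submatrix I.row (fullCol m)) :=
  qMinorG_eq_qdet _ _

theorem minor_mem (I : PluckerIndex m n) : I.minor k ∈ QDeltaSub k m n :=
  Algebra.subset_adjoin ⟨I.rows, I.card_rows, I.rows_subset, rfl⟩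

end PluckerIndex

theorem QDeltaSub_eq_adjoin_range (k : Type) [Field k] (m n : ℕ) :
    QDeltaSub k m n =
      Algebra.adjoin (kq k) (Set.range fun I : PluckerIndex m n => I.minor k) := by
  refine congrArg (Algebra.adjoin (kq k)) (Set.ext fun x => ⟨?_, ?_⟩)
  · rintro ⟨I, hI, hsub, rfl⟩
    exact ⟨⟨I, hI, hsub⟩, rfl⟩
  · rintro ⟨I, rfl⟩
    exact ⟨I.rows, I.card_rows, I.rows_subset, rfl⟩

theorem rqProp_iff (hm : m ≤ m') (hn : n ≤ n') {r : QDeltaSub k m n →ₐ[kq k] QDeltaSub k m' n'} :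
    rqProp k m n m' n' r ↔
      ∀ I : PluckerIndex m n, (r ⟨I.minor k, I.minor_mem⟩ : QMat k m' n') =
        (I.pad hm hn).minor k :=
  ⟨fun h I => h I.rows I.card_rows I.rows_subset I.minor_mem (I.pad hm hn).card_rows
      (I.pad hm hn).rows_subset,
    fun h I hI hsub _ _ _ => h ⟨I, hI, hsub⟩⟩

theorem QDeltaSub_algHom_ext {B : Type*} [Semiring B] [Algebra (kq k) B]
    {φ ψ : QDeltaSub k m n →ₐ[kq k] B}
    (h : ∀ I : PluckerIndex m n, φ ⟨I.minor k, I.minor_mem⟩ = ψ ⟨I.minor k, I.minor_mem⟩) :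
    φ = ψ := by
  refine AlgHom.adjoin_ext ?_
  rintro _ ⟨I, hI, hsub, rfl⟩
  exact h ⟨I, hI, hsub⟩

theorem exists_rqProp_of_algHom (hm : m ≤ m') (hn : n ≤ n')
    (φ : QDeltaSub k m n →ₐ[kq k] QMat k m' n')
    (hφ : ∀ I : PluckerIndex m n, φ ⟨I.minor k, I.minor_mem⟩ = (I.pad hm hn).minor k) :
    ∃ r, rqProp k m n m' n' r := by
  have comap_eq_top : (QDeltaSub k m' n').comap φ = ⊤ := by
    refine top_unique (Algebra.adjoin_adjoin_coe_preimage.ge.trans (Algebra.adjoin_le ?_))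
    rintro ⟨_, _⟩ ⟨I, hI, hsub, rfl⟩
    exact (hφ ⟨I, hI, hsub⟩ ▸ PluckerIndex.minor_mem _ : φ ⟨qMinor k m n I hI hsub, _⟩ ∈ _)
  exact ⟨φ.codRestrict _ fun x => (comap_eq_top.ge trivial :), (rqProp_iff hm hn).2 hφ⟩

theorem rqProp.comp {m'' n'' : ℕ} {r : QDeltaSub k m n →ₐ[kq k] QDeltaSub k m' n'}
    {r' : QDeltaSub k m' n' →ₐ[kq k] QDeltaSub k m'' n''} (hr' : rqProp k m' n' m'' n'' r')
    (hr : rqProp k m n m' n' r) (hm : m ≤ m') (hn : n ≤ n') (hm' : m' ≤ m'') (hn' : n' ≤ n'') :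
    rqProp k m n m'' n'' (r'.comp r) := by
  rw [rqProp_iff hm hn] at hr
  rw [rqProp_iff hm' hn'] at hr'
  refine (rqProp_iff (hm.trans hm') (hn.trans hn')).2 fun I => ?_
  have image_minor : r ⟨I.minor k, I.minor_mem⟩ =
      ⟨(I.pad hm hn).minor k, PluckerIndex.minor_mem _⟩ := Subtype.ext (hr I)
  rw [AlgHom.comp_apply, image_minor, hr', PluckerIndex.pad_pad]

theorem exists_rqProp_self (hn : n ≤ n') : ∃ r, rqProp k m n m n' r := by
  have hX : IsQuantumMatrix (qParam k)
      ((Matrix.of (qgen k (RowI m n') (ColI m))).submatrix (rowIncl le_rfl hn) id) :=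
    isQuantumMatrix_qgen.submatrix (fun _ _ h => h) strictMono_id
  refine exists_rqProp_of_algHom le_rfl hn (hX.lift.comp (QDeltaSub k m n).val) fun I => ?_
  refine (hX.lift_qMinorG _ _).trans ?_
  rw [PluckerIndex.minor_eq_qdet, I.row_pad_of_eq]
  rfl

theorem exists_rqProp_succ (hm : 0 < m) : ∃ r, rqProp k m n (m + 1) n r := by
  obtain ⟨s, rfl⟩ := Nat.exists_eq_succ_of_ne_zero hm.ne'
  obtain ⟨r, hr⟩ := exists_algHom_adjoin_qMinorG_bordered
    (isQuantumMatrix_qgen (k := k) (R := RowI (s + 1 + 1) n) (C := ColI (s + 1 + 1)))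
    (isLeftRegular_qgen (isBot_firstRow (s + 1) n) (isBot_firstCol (s + 1)))
    (f := rowIncl (s + 1).le_succ le_rfl) (fun _ _ h => h) firstRow_lt_rowIncl
    (g := colIncl (s + 1).le_succ) (fun _ _ h => h) firstCol_lt_colIncl
    (row := fun I : PluckerIndex (s + 1) n => I.row) (fun I => I.row_strictMono)
    (col := fun _ => fullCol (s + 1)) (fun _ => fullCol_strictMono _)
  refine exists_rqProp_of_algHom (s + 1).le_succ le_rfl
    (r.comp (Subalgebra.inclusion (QDeltaSub_eq_adjoin_range k (s + 1) n).le))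
    fun I => (hr I).trans ?_
  rw [PluckerIndex.minor_eq_qdet, I.row_pad_succ, fullCol_succ (s + 1)]

theorem exists_rqProp (hm : 0 < m) (hmm : m ≤ m') (hnn : n ≤ n') :
    ∃ r, rqProp k m n m' n' r := by
  induction m', hmm using Nat.le_induction with
  | base => exact exists_rqProp_self hnn
  | succ M hM ih =>
    obtain ⟨r, hr⟩ := ih
    obtain ⟨r', hr'⟩ := exists_rqProp_succ (k := k) (n := n') (hm.trans_le hM)
    exact ⟨r'.comp r, hr'.comp hr hM hnn M.le_succ le_rfl⟩

theorem rqProp.eq {r r' : QDeltaSub k m n →ₐ[kq k] QDeltaSub k m' n'}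
    (hr : rqProp k m n m' n' r) (hr' : rqProp k m n m' n' r') (hm : m ≤ m') (hn : n ≤ n') :
    r = r' :=
  QDeltaSub_algHom_ext fun I =>
    Subtype.ext (((rqProp_iff hm hn).1 hr I).trans ((rqProp_iff hm hn).1 hr' I).symm)

end Grassmannian

section Retraction

variable {k : Type} [Field k] {m n m' n' : ℕ}

/-- The generic matrix of `k_q[a]_{m,n}` extended by the identity matrix to all integral indices:
its entries on the rows and columns of `k_q[a]_{m',n'}` are the images of the generators under
`E^q_{(m',n',m,n)}`. -/
def extendedMatrix (k : Type) [Field k] (m n : ℕ) : Matrix ℤ ℤ (QMat k m n) :=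
  Matrix.of fun i j =>
    if h : i ∈ Finset.Icc (-(m : ℤ)) ((n : ℤ) - 1) ∧ j ∈ Finset.Icc (-(m : ℤ)) (-1 : ℤ) then
      av k m n ⟨i, h.1⟩ ⟨j, h.2⟩
    else if i = j then 1 else 0

/-- The maximal minor of `extendedMatrix k m n` on the rows in `J` and the columns
`-m', …, -1`. -/
def extendedMinor (k : Type) [Field k] (m n : ℕ) (J : PluckerIndex m' n') : QMat k m n :=
  qdet (qParam k)
    ((extendedMatrix k m n).submatrix (Subtype.val ∘ J.row) (Subtype.val ∘ fullCol m'))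

theorem extendedMatrix_coe (i : RowI m n) (j : ColI m) :
    extendedMatrix k m n i j = qgen k (RowI m n) (ColI m) i j :=
  dif_pos ⟨i.2, j.2⟩

theorem extendedMatrix_of_lt {i : ℤ} (hi : i < -m) (j : ℤ) :
    extendedMatrix k m n i j = if i = j then 1 else 0 :=
  dif_neg fun h => hi.not_ge (Finset.mem_Icc.1 h.1).1

theorem EqProp.map_minor {E : QMat k m' n' →ₐ[kq k] QMat k m n} (hE : EqProp k m n m' n' E)
    (J : PluckerIndex m' n') : E (J.minor k) = extendedMinor k m n J := by
  rw [PluckerIndex.minor_eq_qdet]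
  refine (map_qdet (K := kq k) (A := QMat k m' n') (B := QMat k m n) E (qParam k) _).trans
    (congrArg _ (Matrix.ext fun i j => ?_))
  exact hE (J.row i) (fullCol m' j)

theorem extendedMinor_pad_succ (hm : m ≤ m') (J : PluckerIndex m' n') :
    extendedMinor k m n (J.pad m'.le_succ le_rfl) = extendedMinor k m n J := by
  have hlt : (firstRow m' n' : ℤ) < -m := by
    change -((m' + 1 : ℕ) : ℤ) < -m
    omega
  rw [extendedMinor, J.row_pad_succ, fullCol_succ]
  refine qdet_eq_of_row_zero_eq_single (K := kq k) (A := QMat k m n) (qParam k) ?_ fun j => ?_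
  · exact (extendedMatrix_of_lt hlt _).trans (if_pos rfl)
  · exact (extendedMatrix_of_lt hlt _).trans
      (if_neg (Subtype.coe_lt_coe.2 (firstCol_lt_colIncl (fullCol m' j))).ne)

theorem extendedMinor_pad (hm : m ≤ m') (hn : n ≤ n') (I : PluckerIndex m n) :
    extendedMinor k m n (I.pad hm hn) = I.minor k := by
  induction m', hm using Nat.le_induction with
  | base =>
    rw [extendedMinor, I.row_pad_of_eq, PluckerIndex.minor_eq_qdet]
    exact congrArg _ (Matrix.ext fun i j => extendedMatrix_coe (I.row i) (fullCol m j))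
  | succ M hM ih => rw [← I.pad_pad hM hn M.le_succ le_rfl, extendedMinor_pad_succ hM, ih]

theorem EqProp.comp_rqProp {E : QMat k m' n' →ₐ[kq k] QMat k m n} (hE : EqProp k m n m' n' E)
    {r : QDeltaSub k m n →ₐ[kq k] QDeltaSub k m' n'} (hr : rqProp k m n m' n' r) (hm : m ≤ m')
    (hn : n ≤ n') (x : QDeltaSub k m n) : E (r x : QMat k m' n') = x := by
  refine DFunLike.congr_fun (QDeltaSub_algHom_ext
    (φ := (E.comp (QDeltaSub k m' n').val).comp r) (ψ := (QDeltaSub k m n).val) fun I => ?_) x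
  calc E (r ⟨I.minor k, I.minor_mem⟩ : QMat k m' n')
      = E ((I.pad hm hn).minor k) := congrArg E ((rqProp_iff hm hn).1 hr I)
    _ = I.minor k := (hE.map_minor _).trans (extendedMinor_pad hm hn I)

end Retraction

/-- there is a unique `k_q`-algebra homomorphism
`r^q_{(m,n,m',n')} : k_q[Δ_{m,n}] → k_q[Δ_{m',n'}]` sending `D_{l_0…l_{m-1}}` to
`D_{-m',…,-m-1,l_0,…,l_{m-1}}`; moreover `e^q_{(m',n',m,n)} ∘ r^q_{(m,n,m',n')} = id`,
and in particular `r^q_{(m,n,m',n')}` is injective. -/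
theorem stmt14 (k : Type) [Field k] (m n m' n' : ℕ) (hm : 0 < m) (hn : 0 < n)
    (hmm : m ≤ m') (hnn : n ≤ n')
    (E : QMat k m' n' →ₐ[kq k] QMat k m n) (hE : EqProp k m n m' n' E) :
    (∃! r : ↥(QDeltaSub k m n) →ₐ[kq k] ↥(QDeltaSub k m' n'), rqProp k m n m' n' r) ∧
    (∀ r : ↥(QDeltaSub k m n) →ₐ[kq k] ↥(QDeltaSub k m' n'), rqProp k m n m' n' r →
      (∀ x : ↥(QDeltaSub k m n),
        E ((r x : QMat k m' n')) = (x : QMat k m n)) ∧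
      Function.Injective r) := by
  refine ⟨existsUnique_of_exists_of_unique (exists_rqProp hm hmm hnn)
    fun r r' hr hr' => hr.eq hr' hmm hnn, fun r hr => ?_⟩
  have retraction (x : QDeltaSub k m n) : E (r x : QMat k m' n') = x :=
    hE.comp_rqProp hr hmm hnn x
  refine ⟨retraction, fun x y h => Subtype.ext ?_⟩
  rw [← retraction x, h, retraction y]

end
end

section
/- Let k be an algebraically closed field of characteristic 0. For each (m,n), let ρ_{(m,n)} : k[b]_{m,n} → k[b]_{m,n} ⊗_k k[SL_{m,0}] be the k-algebra homomorphism with ρ_{(m,n)}(b_{i,j}) = Σ_{k=-m}^{-1} b_{i,k} ⊗ g_{k,j} (the coaction dual to the right action of SL_m on N×m matrices by right multiplication). Then for every compatible family x = (x_{(m,n)}) ∈ k[M_∞], the following are equivalent: (i) ρ_{(m,n)}(x_{(m,n)}) = x_{(m,n)} ⊗ 1 for all (m,n); (ii) x_{(m,n)} ∈ k[δ_{m,n}] for all (m,n). In other words, the ring of coinvariants k[M_∞]^{k[SL_{∞,0}]} equals k̂[δ_∞], the inverse limit of the homogeneous coordinate rings of the grassmannians, viewed inside k[M_∞] as the subring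 of families with all components in k[δ_{m,n}]. -/
open MvPolynomial TensorProduct

set_option maxHeartbeats 2000000
set_option synthInstance.maxHeartbeats 400000

noncomputable section

/-- `k[a]_{m,n}`, the coordinate ring of generic `(m+n) × m` matrices. -/
abbrev MatRing (k : Type) [Field k] (m n : ℕ) : Type :=
  MvPolynomial (RowI m n × ColI m) k

/-- The maximal minor `d_I` on the rows in `I` (an `m`-element subset of `{-m,...,n-1}`). -/
def dMinor (k : Type) [Field k] (m n : ℕ) (I : Finset ℤ) (hI : I.card = m)
    (hsub : I ⊆ Finset.Icc (-(m : ℤ)) ((n : ℤ) - 1)) : MatRing k m n :=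
  Matrix.det (Matrix.of fun s t : Fin m =>
    (X (⟨I.orderEmbOfFin hI s, hsub (Finset.orderEmbOfFin_mem I hI s)⟩,
       ⟨-(m : ℤ) + (t : ℕ), by
          have := t.2
          simp only [Finset.mem_Icc]
          omega⟩) : MatRing k m n))

/-- `k[δ_{m,n}]`, the subalgebra generated by all the maximal minors. -/
def DeltaSub (k : Type) [Field k] (m n : ℕ) : Subalgebra k (MatRing k m n) :=
  Algebra.adjoin k {x | ∃ I hI hsub, x = dMinor k m n I hI hsub}

/-- The substitution homomorphism `E_{(m',n',m,n)} : k[a]_{m',n'} → k[a]_{m,n}`. -/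
def Emap (k : Type) [Field k] (m n m' n' : ℕ) : MatRing k m' n' →ₐ[k] MatRing k m n :=
  aeval fun p : RowI m' n' × ColI m' =>
    if h : (p.1.1 ∈ Finset.Icc (-(m : ℤ)) ((n : ℤ) - 1)) ∧
        (p.2.1 ∈ Finset.Icc (-(m : ℤ)) (-1 : ℤ)) then
      (X (⟨p.1.1, h.1⟩, ⟨p.2.1, h.2⟩) : MatRing k m n)
    else if p.1.1 = p.2.1 then 1 else 0



open MvPolynomial TensorProduct

/-- Row/column indices of the generic `N × N` matrix, `N = m+n`:
the integers `-m, ..., n-1`. -/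
abbrev SqIdx (m n : ℕ) : Type := ↥(Finset.Icc (-(m : ℤ)) ((n : ℤ) - 1))

/-- The determinant of the generic `N × N` matrix `(g_{i,j})`. -/
def genDet (k : Type) [Field k] (m n : ℕ) : MvPolynomial (SqIdx m n × SqIdx m n) k :=
  Matrix.det (Matrix.of fun i j : SqIdx m n => (X (i, j) : MvPolynomial (SqIdx m n × SqIdx m n) k))

/-- `k[SL_{m,n}]`: the quotient of the polynomial ring in the `g_{i,j}` by `(det(g) - 1)`. -/
abbrev SLring (k : Type) [Field k] (m n : ℕ) : Type :=
  MvPolynomial (SqIdx m n × SqIdx m n) k ⧸ Ideal.span {genDet k m n - 1}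

/-- The image of the generator `g_{i,j}` in `k[SL_{m,n}]`. -/
def gvar (k : Type) [Field k] (m n : ℕ) (i j : SqIdx m n) : SLring k m n :=
  Ideal.Quotient.mk _ (X (i, j))

/-- The coaction `ρ_{(m,n,m_0)} : k[b]_{m,n} → k[b]_{m,n} ⊗ k[SL_{m_0,0}]`:
`b_{i,j} ↦ Σ_l b_{i,l} ⊗ g_{l,j}` for `-m_0 ≤ j ≤ -1`, and `b_{i,j} ↦ b_{i,j} ⊗ 1`
for `-m ≤ j ≤ -m_0 - 1`. -/
def coactB (k : Type) [Field k] (m n m0 : ℕ) (h : m0 ≤ m) :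
    MatRing k m n →ₐ[k] MatRing k m n ⊗[k] SLring k m0 0 :=
  aeval fun p : RowI m n × ColI m =>
    if h2 : p.2.1 ∈ Finset.Icc (-(m0 : ℤ)) (((0 : ℕ) : ℤ) - 1) then
      ∑ l : SqIdx m0 0,
        (X (p.1, ⟨l.1, by
          have hl := Finset.mem_Icc.mp l.2
          have hm : (m0 : ℤ) ≤ (m : ℤ) := by exact_mod_cast h
          exact Finset.mem_Icc.mpr ⟨by omega, by omega⟩⟩) : MatRing k m n) ⊗ₜ[k]
          gvar k m0 0 l ⟨p.2.1, h2⟩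
    else (X p : MatRing k m n) ⊗ₜ[k] 1

/-- The inverse limit of an inverse system of rings, realized concretely as the
subring of the product consisting of the compatible families. -/
def ringInvLim {ι : Type*} [Preorder ι] (G : ι → Type*) [∀ i, Ring (G i)]
    (f : ∀ i j : ι, i ≤ j → (G j →+* G i)) : Subring (∀ i, G i) where
  carrier := {x | ∀ (i j : ι) (h : i ≤ j), f i j h (x j) = x i}
  zero_mem' := by intro i j h; simp
  one_mem' := by intro i j h; simp
  add_mem' := by
    intro a b ha hb i j h
    simp only [Pi.add_apply, map_add, ha i j h, hb i j h]
  mul_mem' := by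
    intro a b ha hb i j h
    simp only [Pi.mul_apply, map_mul, ha i j h, hb i j h]
  neg_mem' := by
    intro a ha i j h
    simp only [Pi.neg_apply, map_neg, ha i j h]

/-- The index set: pairs of positive integers, ordered componentwise. -/
abbrev PIdx : Type := {p : ℕ × ℕ // 0 < p.1 ∧ 0 < p.2}

/-- The pairs `(m,n)` with `m ≥ m_0`. -/
abbrev PIdxGe (m0 : ℕ) : Type := {p : PIdx // m0 ≤ p.1.1}

/-- `k[M_∞]`, the inverse limit of the matrix coordinate rings `k[b]_{m,n}` along the
maps `E_{(m',n',m,n)}`. -/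
def MatInf (k : Type) [Field k] : Subring (∀ p : PIdx, MatRing k p.1.1 p.1.2) :=
  ringInvLim (fun p : PIdx => MatRing k p.1.1 p.1.2)
    (fun p q _ => (Emap k p.1.1 p.1.2 q.1.1 q.1.2).toRingHom)

/-!
Coinvariance for `k[SL_m]` says that `f (x g) = f x` for all matrices `x` and all `g` in `SL_m` over
every `k`-algebra: a coinvariant is specialised along the points of `SL_m`, and conversely the
generic point `(g_{i,j})` recovers the coaction. So the claim is the first fundamental theorem of
invariant theory for `SL_m`, one matrix size at a time.

The homogeneous components of an invariant are invariant, and the central roots of unity force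
their degrees to be multiples `m r` of `m`. Over an algebraically closed field `g` is an `m`-th root
of `det g` times an element of `SL_m`, hence `f (x g) = (det g) ^ r * f x` for generic `x` and `g`.
Now pair both sides, as polynomials in `g`, with `(det g) ^ r` for the apolar pairing
`⟨P, Q⟩ = P(∂) Q |_{g = 0}`. The right side gives `⟨det ^ r, det ^ r⟩ * f`, a positive integer times
`f`. On the left, the substitutions `g ↦ x g` and `g ↦ xᵀ g` are adjoint, which gives
`⟨f, det (xᵀ g) ^ r⟩`, and the coefficients of `det (xᵀ g)` are maximal minors of `x`.
-/

section ApolarPairing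

variable {σ τ R S : Type*} [CommRing R] [CommRing S]

/-- The factorial `α! = ∏ s, (α s)!` of a multi-index. -/
def multiFactorial (α : σ →₀ ℕ) : ℕ := α.prod fun _ n => n.factorial

lemma multiFactorial_zero : multiFactorial (0 : σ →₀ ℕ) = 1 := Finsupp.prod_zero_index

lemma multiFactorial_pos (α : σ →₀ ℕ) : 0 < multiFactorial α :=
  Finset.prod_pos fun _ _ => Nat.factorial_pos _

lemma multiFactorial_add_single (α : σ →₀ ℕ) (s : σ) :
    multiFactorial (α + Finsupp.single s 1) = (α s + 1) * multiFactorial α := by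
  classical
  have factor_out (β : σ →₀ ℕ) :
      multiFactorial β = (β s).factorial * multiFactorial (β.erase s) :=
    (β.mul_prod_erase' s _ fun _ => Nat.factorial_zero).symm
  rw [factor_out (α + _), factor_out α, Finsupp.erase_add, Finsupp.erase_single, add_zero,
    Finsupp.add_apply, Finsupp.single_eq_same, Nat.factorial_succ, mul_assoc]

/-- The apolar (Bombieri, Fischer) pairing `⟨P, Q⟩ = ∑ α, α! P_α Q_α`, i.e. the constant term of
`P(∂) Q`. -/
def apolarPairing : MvPolynomial σ R →ₗ[R] MvPolynomial σ R →ₗ[R] R :=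
  (basisMonomials σ R).constr R fun α => (multiFactorial α : R) • lcoeff R α

lemma apolarPairing_monomial (α : σ →₀ ℕ) (a : R) (Q : MvPolynomial σ R) :
    apolarPairing (monomial α a) Q = a * (multiFactorial α * coeff α Q) := by
  have smul_basis : monomial α a = a • basisMonomials σ R α := by simp [smul_monomial]
  rw [smul_basis, map_smul, apolarPairing, Module.Basis.constr_basis]
  rfl

lemma apolarPairing_C (a : R) (Q : MvPolynomial σ R) :
    apolarPairing (C a) Q = a * constantCoeff Q := by
  rw [C_apply, apolarPairing_monomial, multiFactorial_zero, Nat.cast_one, one_mul,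
    constantCoeff_eq]

lemma apolarPairing_map (f : R →+* S) (P Q : MvPolynomial σ R) :
    apolarPairing (map f P) (map f Q) = f (apolarPairing P Q) := by
  induction P using MvPolynomial.induction_on' with
  | monomial α a => simp [apolarPairing_monomial, coeff_map]
  | add p q hp hq => simp [hp, hq]

lemma apolarPairing_self_pos [LinearOrder R] [IsStrictOrderedRing R] {P : MvPolynomial σ R}
    (hP : P ≠ 0) : 0 < apolarPairing P P := by
  have expand : apolarPairing P P =
      ∑ α ∈ P.support, coeff α P * (multiFactorial α * coeff α P) := by
    conv_lhs => enter [1, 2]; rw [P.as_sum]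
    simp only [map_sum, LinearMap.sum_apply, apolarPairing_monomial]
  rw [expand]
  refine Finset.sum_pos (fun α hα => ?_) (support_nonempty.mpr hP)
  rw [mul_left_comm]
  exact mul_pos (Nat.cast_pos.mpr (multiFactorial_pos α))
    (mul_self_pos.mpr (mem_support_iff.mp hα))

lemma apolarPairing_mul_X (P Q : MvPolynomial σ R) (s : σ) :
    apolarPairing (P * X s) Q = apolarPairing P (pderiv s Q) := by
  induction P using MvPolynomial.induction_on' with
  | monomial α a =>
    rw [X, monomial_mul, apolarPairing_monomial, apolarPairing_monomial, coeff_pderiv,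
      multiFactorial_add_single]
    push_cast
    ring
  | add p q hp hq => simp only [add_mul, map_add, LinearMap.add_apply, hp, hq]

variable [Fintype σ]

lemma toMvPolynomial_eq_sum (M : Matrix τ σ R) (t : τ) :
    M.toMvPolynomial t = ∑ s, C (M t s) * X s := by
  simp only [Matrix.toMvPolynomial, C_mul_X_eq_monomial]

lemma constantCoeff_bind₁_toMvPolynomial (M : Matrix τ σ R) (Q : MvPolynomial τ R) :
    constantCoeff (bind₁ M.toMvPolynomial Q) = constantCoeff Q := by
  induction Q using MvPolynomial.induction_on with
  | C a => simp
  | add p q hp hq => simp [hp, hq]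
  | mul_X p s _ => simp [Matrix.toMvPolynomial_constantCoeff]

variable [Fintype τ]

lemma pderiv_bind₁_toMvPolynomial (M : Matrix τ σ R) (Q : MvPolynomial τ R) (s : σ) :
    pderiv s (bind₁ M.toMvPolynomial Q) =
      ∑ t, C (M t s) * bind₁ M.toMvPolynomial (pderiv t Q) := by
  classical
  induction Q using MvPolynomial.induction_on with
  | C a => simp
  | add p q hp hq => simp [hp, hq, mul_add, Finset.sum_add_distrib]
  | mul_X p u hp =>
    have pderiv_variable : pderiv s (M.toMvPolynomial u) = C (M u s) := by
      simp [toMvPolynomial_eq_sum, pderiv_X, Pi.single_apply]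
    rw [map_mul, pderiv_mul, hp, bind₁_X_right, pderiv_variable]
    simp [pderiv_X, Pi.single_apply, apply_ite, mul_add, Finset.sum_add_distrib, Finset.mul_sum,
      mul_left_comm, mul_comm, add_comm]

lemma apolarPairing_bind₁_toMvPolynomial (M : Matrix σ τ R) (P : MvPolynomial σ R)
    (Q : MvPolynomial τ R) :
    apolarPairing (bind₁ M.toMvPolynomial P) Q =
      apolarPairing P (bind₁ M.transpose.toMvPolynomial Q) := by
  induction P using MvPolynomial.induction_on generalizing Q with
  | C a => simp only [algHom_C, algebraMap_eq, apolarPairing_C, constantCoeff_bind₁_toMvPolynomial]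
  | add p q hp hq => simp only [map_add, LinearMap.add_apply, hp, hq]
  | mul_X p s hp =>
    rw [map_mul, bind₁_X_right, toMvPolynomial_eq_sum, Finset.mul_sum, map_sum,
      LinearMap.sum_apply, apolarPairing_mul_X, pderiv_bind₁_toMvPolynomial, map_sum]
    refine Finset.sum_congr rfl fun t _ => ?_
    rw [mul_left_comm, ← smul_eq_C_mul, map_smul, LinearMap.smul_apply, apolarPairing_mul_X, hp,
      Matrix.transpose_apply, ← smul_eq_C_mul, map_smul]

end ApolarPairing

section GenericMatrices

variable {k S T ι κ : Type*} [CommRing k] [CommRing S] [Algebra k S] [CommRing T] [Algebra k T]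

/-- The value `f(b)` of a polynomial function `f` on `ι × κ` matrices at a matrix `b`. -/
def matrixEval (b : Matrix ι κ S) : MvPolynomial (ι × κ) k →ₐ[k] S :=
  aeval fun p => b p.1 p.2

@[simp]
lemma matrixEval_X (b : Matrix ι κ S) (p : ι × κ) :
    matrixEval b (X p : MvPolynomial (ι × κ) k) = b p.1 p.2 :=
  aeval_X _ p

lemma matrixEval_mvPolynomialX (f : MvPolynomial (ι × κ) k) :
    matrixEval (Matrix.mvPolynomialX ι κ k) f = f :=
  aeval_X_left_apply f

lemma matrixEval_map_algebraMap [Algebra S T] [IsScalarTower k S T] (b : Matrix ι κ T)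
    (f : MvPolynomial (ι × κ) k) : matrixEval b (map (algebraMap k S) f) = matrixEval b f :=
  aeval_map_algebraMap ..

lemma algHom_matrixEval (φ : S →ₐ[k] T) (b : Matrix ι κ S) (f : MvPolynomial (ι × κ) k) :
    φ (matrixEval b f) = matrixEval (b.map φ) f :=
  comp_aeval_apply (fun p : ι × κ => b p.1 p.2) φ f

lemma aeval_smul_of_isHomogeneous {σ : Type*} {f : MvPolynomial σ k} {d : ℕ}
    (hf : f.IsHomogeneous d) (c : S) (g : σ → S) : aeval (c • g) f = c ^ d * aeval g f := by
  rw [aeval_def, aeval_def, eval₂_eq, eval₂_eq, Finset.mul_sum]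
  refine Finset.sum_congr rfl fun α hα => ?_
  simp only [Pi.smul_apply, smul_eq_mul, mul_pow, Finset.prod_mul_distrib,
    Finset.prod_pow_eq_pow_sum]
  rw [hf.degree_eq_sum_deg_support hα, mul_left_comm]

lemma matrixEval_smul {f : MvPolynomial (ι × κ) k} {d : ℕ} (hf : f.IsHomogeneous d) (c : S)
    (b : Matrix ι κ S) : matrixEval (c • b) f = c ^ d * matrixEval b f :=
  aeval_smul_of_isHomogeneous hf c _

lemma coeff_matrixEval_X_smul (b : Matrix ι κ S) (f : MvPolynomial (ι × κ) k) (d : ℕ) :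
    (matrixEval ((Polynomial.X : Polynomial S) • b.map Polynomial.C) f).coeff d =
      matrixEval b (homogeneousComponent d f) := by
  have matrixEval_C (g : MvPolynomial (ι × κ) k) :
      matrixEval (b.map Polynomial.C) g = Polynomial.C (matrixEval b g) :=
    (algHom_matrixEval ((Polynomial.CAlgHom : S →ₐ[S] Polynomial S).restrictScalars k) b g).symm
  induction f using MvPolynomial.induction_on' with
  | monomial α a =>
    have homogeneous : (monomial α a).IsHomogeneous α.degree := isHomogeneous_monomial a rfl
    rw [matrixEval_smul homogeneous, matrixEval_C, Polynomial.X_pow_mul_C,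
      Polynomial.coeff_C_mul_X_pow, homogeneousComponent_of_mem homogeneous]
    split_ifs <;> simp
  | add p q hp hq => simp only [map_add, Polynomial.coeff_add, hp, hq]

variable {α : Type*} [Fintype ι]

variable (κ) in
/-- The product `b * Y` of `b` with the generic `ι × κ` matrix `Y`. A polynomial evaluated at it
is the polynomial function `Y ↦ f(b * Y)`. -/
def mulGeneric (b : Matrix α ι k) : Matrix α κ (MvPolynomial (ι × κ) k) :=
  (b.map C : Matrix α ι (MvPolynomial (ι × κ) k)) * Matrix.mvPolynomialX ι κ k

open scoped Kronecker in
lemma matrixEval_mulGeneric_eq_bind₁ [Fintype κ] [DecidableEq κ] (b : Matrix α ι k)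
    (f : MvPolynomial (α × κ) k) :
    matrixEval (mulGeneric κ b) f = bind₁ (b ⊗ₖ (1 : Matrix κ κ k)).toMvPolynomial f := by
  unfold matrixEval bind₁
  congr 2
  ext1 p
  simp [toMvPolynomial_eq_sum, mulGeneric, Fintype.sum_prod_type, Matrix.mul_apply,
    Matrix.one_apply, apply_ite C]

lemma apolarPairing_matrixEval_mulGeneric [Finite κ] [Fintype α] (b : Matrix α ι k)
    (P : MvPolynomial (α × κ) k) (Q : MvPolynomial (ι × κ) k) :
    apolarPairing (matrixEval (mulGeneric κ b) P) Q =
      apolarPairing P (matrixEval (mulGeneric κ b.transpose) Q) := by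
  classical
  cases nonempty_fintype κ
  rw [matrixEval_mulGeneric_eq_bind₁, matrixEval_mulGeneric_eq_bind₁,
    apolarPairing_bind₁_toMvPolynomial, ← Matrix.kroneckerMap_transpose, Matrix.transpose_one]

variable [Fintype κ] [DecidableEq κ]

lemma det_mul_eq_sum_det_submatrix (A : Matrix κ ι S) (B : Matrix ι κ S) :
    (A * B).det = ∑ e : κ → ι, (A.submatrix id e).det * ∏ j, B (e j) j := by
  classical
  simp only [Matrix.det_apply', Matrix.mul_apply, Matrix.submatrix_apply, id,
    Finset.prod_univ_sum, Fintype.piFinset_univ, Finset.prod_mul_distrib, Finset.mul_sum,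
    Finset.sum_mul, mul_assoc]
  exact Finset.sum_comm

lemma exists_apolarPairing_det_pow_self (κ R : Type*) [Fintype κ] [DecidableEq κ] [CommRing R]
    (r : ℕ) :
    ∃ c : ℤ, 0 < c ∧ apolarPairing ((Matrix.mvPolynomialX κ κ R).det ^ r)
      ((Matrix.mvPolynomialX κ κ R).det ^ r) = c := by
  have det_eq_map : (Matrix.mvPolynomialX κ κ R).det =
      map (Int.castRingHom R) (Matrix.mvPolynomialX κ κ ℤ).det := by
    rw [RingHom.map_det]
    congr 1
    ext1 i j
    simp
  refine ⟨_, apolarPairing_self_pos (pow_ne_zero r (Matrix.det_mvPolynomialX_ne_zero κ ℤ)), ?_⟩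
  rw [det_eq_map, ← map_pow, apolarPairing_map, eq_intCast]

end GenericMatrices

section FirstFundamentalTheorem

universe u

/-- The algebra generated by the maximal minors of the generic `ι × κ` matrix; the rows of a minor
are chosen by an arbitrary `e : κ → ι`, so minors occur up to sign and with repeated rows. -/
def minorSubalgebra (k ι κ : Type*) [CommRing k] [Fintype κ] [DecidableEq κ] :
    Subalgebra k (MvPolynomial (ι × κ) k) :=
  Algebra.adjoin k
    (Set.range fun e : κ → ι => ((Matrix.mvPolynomialX ι κ k).submatrix e id).det)

/-- The polynomial functions on `ι × κ` matrices invariant under right multiplication by the group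
scheme `SL_κ`, in terms of its points in all `k`-algebras. -/
def slInvariants (k ι κ : Type u) [CommRing k] [Fintype κ] [DecidableEq κ] :
    Subalgebra k (MvPolynomial (ι × κ) k) where
  carrier := {f | ∀ (S : Type u) [CommRing S] [Algebra k S] (b : Matrix ι κ S)
    (M : Matrix.SpecialLinearGroup κ S), matrixEval (b * M.1) f = matrixEval b f}
  mul_mem' hf hg S _ _ b M := by simp only [map_mul, hf S b M, hg S b M]
  add_mem' hf hg S _ _ b M := by simp only [map_add, hf S b M, hg S b M]
  algebraMap_mem' c S _ _ b M := by simp only [AlgHom.commutes]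

variable {k ι κ : Type u} [Fintype κ] [DecidableEq κ]

section CommRing

variable [CommRing k]

lemma matrixEval_det_submatrix {S : Type*} [CommRing S] [Algebra k S] (b : Matrix ι κ S)
    (e : κ → ι) :
    matrixEval b ((Matrix.mvPolynomialX ι κ k).submatrix e id).det = (b.submatrix e id).det := by
  rw [AlgHom.map_det]
  congr 1
  ext1 i j
  simp

variable (k ι κ) in
lemma minorSubalgebra_le_slInvariants : minorSubalgebra k ι κ ≤ slInvariants k ι κ := by
  refine Algebra.adjoin_le ?_
  rintro _ ⟨e, rfl⟩ S _ _ b M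
  have submatrix_mul : (b * M.1).submatrix e id = b.submatrix e id * M.1 := rfl
  rw [matrixEval_det_submatrix, matrixEval_det_submatrix, submatrix_mul, Matrix.det_mul, M.2,
    mul_one]

lemma homogeneousComponent_mem_slInvariants {f : MvPolynomial (ι × κ) k}
    (hf : f ∈ slInvariants k ι κ) (d : ℕ) : homogeneousComponent d f ∈ slInvariants k ι κ := by
  intro S _ _ b M
  have scaled := hf (Polynomial S) ((Polynomial.X : Polynomial S) • b.map Polynomial.C)
    (M.map Polynomial.C)
  have scaled_mul : (Polynomial.X : Polynomial S) • b.map Polynomial.C * (M.map Polynomial.C).1 =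
      (Polynomial.X : Polynomial S) • (b * M.1).map Polynomial.C := by
    rw [Matrix.smul_mul, Matrix.map_mul]
    rfl
  rw [scaled_mul] at scaled
  rw [← coeff_matrixEval_X_smul, scaled, coeff_matrixEval_X_smul]

lemma matrixEval_mul_of_mem_slInvariants [Nonempty κ] {f : MvPolynomial (ι × κ) k}
    (hf : f ∈ slInvariants k ι κ) {r : ℕ} (hr : f.IsHomogeneous (Fintype.card κ * r))
    {A : Type u} [CommRing A] [IsDomain A] [Algebra k A] (b : Matrix ι κ A) {N : Matrix κ κ A}
    (hN : N.det ≠ 0) : matrixEval (b * N) f = N.det ^ r * matrixEval b f := by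
  let K := AlgebraicClosure (FractionRing A)
  let φ : A →ₐ[k] K := IsScalarTower.toAlgHom k A K
  have φ_injective : Function.Injective φ := by
    change Function.Injective (algebraMap A K)
    rw [IsScalarTower.algebraMap_eq A (FractionRing A) K]
    exact (algebraMap (FractionRing A) K).injective.comp (IsFractionRing.injective A _)
  obtain ⟨t, ht⟩ := IsAlgClosed.exists_pow_nat_eq (φ N.det) (Fintype.card_pos (α := κ))
  have ht0 : t ≠ 0 := by
    rintro rfl
    rw [zero_pow Fintype.card_ne_zero, eq_comm, map_eq_zero_iff φ φ_injective] at ht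
    exact hN ht
  let M : Matrix.SpecialLinearGroup κ K := ⟨t⁻¹ • N.map φ, by
    rw [Matrix.det_smul, inv_pow, ht, ← AlgHom.mapMatrix_apply, ← AlgHom.map_det]
    exact inv_mul_cancel₀ (ht ▸ pow_ne_zero _ ht0)⟩
  have factor : (b * N).map φ = (t • b.map φ) * M.1 := by
    rw [Matrix.map_mul, Matrix.smul_mul, Matrix.mul_smul, smul_inv_smul₀ ht0]
  apply φ_injective
  calc φ (matrixEval (b * N) f) = matrixEval ((t • b.map φ) * M.1) f := by
        rw [algHom_matrixEval, factor]
    _ = matrixEval (t • b.map φ) f := hf K _ M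
    _ = φ N.det ^ r * φ (matrixEval b f) := by
        rw [matrixEval_smul hr, pow_mul, ht, algHom_matrixEval]
    _ = φ (N.det ^ r * matrixEval b f) := by rw [map_mul, map_pow]

lemma det_mulGeneric_transpose_mem_rangeS_map [Fintype ι] :
    (mulGeneric κ (Matrix.mvPolynomialX ι κ k).transpose).det ∈
      (map (σ := ι × κ) (minorSubalgebra k ι κ).val.toRingHom).rangeS := by
  rw [mulGeneric, det_mul_eq_sum_det_submatrix]
  refine sum_mem fun e _ => mul_mem ?_ (prod_mem fun j _ => ⟨X (e j, j), ?_⟩)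
  · refine ⟨C ⟨_, Algebra.subset_adjoin ⟨e, rfl⟩⟩, ?_⟩
    rw [map_C, ← Matrix.det_transpose, Matrix.transpose_submatrix]
    exact RingHom.map_det C _
  · simp

end CommRing

variable [Field k] [CharZero k]

lemma card_dvd_of_mem_slInvariants [Nonempty κ] {f : MvPolynomial (ι × κ) k}
    (hf : f ∈ slInvariants k ι κ) (hf0 : f ≠ 0) {d : ℕ} (hd : f.IsHomogeneous d) :
    Fintype.card κ ∣ d := by
  let K := AlgebraicClosure k
  obtain ⟨ζ, hζ⟩ := HasEnoughRootsOfUnity.exists_primitiveRoot K (Fintype.card κ)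
  let M : Matrix.SpecialLinearGroup κ (MvPolynomial (ι × κ) K) :=
    ⟨C ζ • 1, by rw [Matrix.det_smul, ← C_pow, hζ.pow_eq_one, C_1, Matrix.det_one, mul_one]⟩
  have generic_value_ne_zero : matrixEval (Matrix.mvPolynomialX ι κ K) f ≠ 0 := by
    rw [← matrixEval_map_algebraMap (S := K), matrixEval_mvPolynomialX]
    exact (map_eq_zero_iff _ (map_injective _ (algebraMap k K).injective)).not.mpr hf0
  have invariant := hf _ (Matrix.mvPolynomialX ι κ K) M
  rw [Matrix.mul_smul, Matrix.mul_one, matrixEval_smul hd] at invariant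
  refine hζ.dvd_of_pow_eq_one d (C_injective (ι × κ) K ?_)
  rw [C_pow, C_1]
  exact (mul_eq_right₀ generic_value_ne_zero).mp invariant

lemma mem_minorSubalgebra_of_matrixEval_mulGeneric [Finite ι] {f : MvPolynomial (ι × κ) k}
    {r : ℕ}
    (hf : matrixEval (mulGeneric κ (Matrix.mvPolynomialX ι κ k)) f =
      (Matrix.mvPolynomialX κ κ (MvPolynomial (ι × κ) k)).det ^ r * C f) :
    f ∈ minorSubalgebra k ι κ := by
  cases nonempty_fintype ι
  set D := (Matrix.mvPolynomialX κ κ (MvPolynomial (ι × κ) k)).det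
  set δ := minorSubalgebra k ι κ
  set x := Matrix.mvPolynomialX ι κ k
  obtain ⟨c, hc, hcD⟩ := exists_apolarPairing_det_pow_self κ (MvPolynomial (ι × κ) k) r
  have pairing_eq_smul : apolarPairing (D ^ r * C f) (D ^ r) = (c : k) • f := by
    rw [mul_comm, ← smul_eq_C_mul, map_smul, LinearMap.smul_apply, hcD, smul_eq_mul, mul_comm,
      smul_eq_C_mul, map_intCast]
  have pairing_mem : apolarPairing (D ^ r * C f) (D ^ r) ∈ δ := by
    obtain ⟨P, hP⟩ := pow_mem (det_mulGeneric_transpose_mem_rangeS_map (k := k) (ι := ι) (κ := κ)) r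
    have adjoint : matrixEval (mulGeneric κ x.transpose) (D ^ r) = map δ.val.toRingHom P := by
      rw [hP, map_pow]
      exact congrArg (· ^ r) (matrixEval_det_submatrix _ id)
    have f_eq : map (algebraMap k (MvPolynomial (ι × κ) k)) f =
        map δ.val.toRingHom (map (algebraMap k δ) f) := by
      rw [MvPolynomial.map_map]
      rfl
    rw [← hf, ← matrixEval_map_algebraMap (S := MvPolynomial (ι × κ) k),
      apolarPairing_matrixEval_mulGeneric, adjoint, f_eq, apolarPairing_map]
    exact Subtype.prop _
  rw [pairing_eq_smul] at pairing_mem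
  exact (δ.toSubmodule.smul_mem_iff (Int.cast_ne_zero.mpr hc.ne')).mp pairing_mem

variable (k ι κ) in
theorem slInvariants_eq_minorSubalgebra [Finite ι] :
    slInvariants k ι κ = minorSubalgebra k ι κ := by
  refine le_antisymm (fun f hf => ?_) (minorSubalgebra_le_slInvariants k ι κ)
  obtain _ | _ := isEmpty_or_nonempty κ
  · rw [eq_C_of_isEmpty f]
    exact (minorSubalgebra k ι κ).algebraMap_mem _
  rw [← sum_homogeneousComponent f]
  refine sum_mem fun d _ => ?_
  have component_mem := homogeneousComponent_mem_slInvariants hf d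
  have component_homogeneous := homogeneousComponent_isHomogeneous d f
  generalize homogeneousComponent d f = g at component_mem component_homogeneous ⊢
  obtain rfl | hg := eq_or_ne g 0
  · exact zero_mem _
  obtain ⟨r, rfl⟩ := card_dvd_of_mem_slInvariants component_mem hg component_homogeneous
  refine mem_minorSubalgebra_of_matrixEval_mulGeneric (r := r) ?_
  have matrixEval_map_C : matrixEval ((Matrix.mvPolynomialX ι κ k).map C) g =
      (C g : MvPolynomial (κ × κ) (MvPolynomial (ι × κ) k)) := by
    have h := algHom_matrixEval (IsScalarTower.toAlgHom k (MvPolynomial (ι × κ) k)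
      (MvPolynomial (κ × κ) (MvPolynomial (ι × κ) k))) (Matrix.mvPolynomialX ι κ k) g
    rw [matrixEval_mvPolynomialX] at h
    exact h.symm
  rw [mulGeneric, matrixEval_mul_of_mem_slInvariants component_mem component_homogeneous _
    (Matrix.det_mvPolynomialX_ne_zero κ _), matrixEval_map_C]

end FirstFundamentalTheorem

section Grassmannian

/-- The columns `-m, ..., -1` enumerated in increasing order. -/
def finEquivColI (m : ℕ) : Fin m ≃ ColI m where
  toFun t := ⟨-(m : ℤ) + (t : ℕ), by have := t.2; rw [Finset.mem_Icc]; omega⟩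
  invFun j := ⟨(j.1 + m).toNat, by have := Finset.mem_Icc.mp j.2; omega⟩
  left_inv t := by ext; simp
  right_inv j := by have := Finset.mem_Icc.mp j.2; ext; dsimp only; omega

/-- The indices `-m, ..., 0 - 1` of the matrices in `SL_{m,0}` are the columns `-m, ..., -1`. -/
def sqIdxEquivColI (m : ℕ) : SqIdx m 0 ≃ ColI m :=
  Equiv.subtypeEquivRight fun x => by simp

variable (k : Type) [Field k] (m n : ℕ)

lemma dMinor_eq_det_submatrix (I : Finset ℤ) (hI : I.card = m)
    (hsub : I ⊆ Finset.Icc (-(m : ℤ)) ((n : ℤ) - 1)) :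
    dMinor k m n I hI hsub = ((Matrix.mvPolynomialX (RowI m n) (ColI m) k).submatrix
      (fun j => ⟨I.orderEmbOfFin hI ((finEquivColI m).symm j),
        hsub (I.orderEmbOfFin_mem hI _)⟩) id).det := by
  rw [← Matrix.det_submatrix_equiv_self (finEquivColI m)]
  refine congrArg Matrix.det (Matrix.ext fun s t => ?_)
  simp only [Matrix.submatrix_apply, Equiv.symm_apply_apply]
  rfl

variable {m n}

lemma exists_dMinor_eq_sign_mul_det {e : ColI m → RowI m n} (he : Function.Injective e) :
    ∃ I hI hsub, ∃ π : Equiv.Perm (Fin m), dMinor k m n I hI hsub = Equiv.Perm.sign π *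
      ((Matrix.mvPolynomialX (RowI m n) (ColI m) k).submatrix e id).det := by
  let rows : Fin m → ℤ := fun s => (e (finEquivColI m s)).1
  have rows_injective : Function.Injective rows :=
    Subtype.val_injective.comp (he.comp (finEquivColI m).injective)
  let π := Tuple.sort rows
  have sorted : StrictMono (rows ∘ π) :=
    (Tuple.monotone_sort rows).strictMono_of_injective (rows_injective.comp π.injective)
  let I := Finset.univ.image rows
  have hI : I.card = m := by
    rw [Finset.card_image_of_injective _ rows_injective, Finset.card_fin]
  have hsub : I ⊆ Finset.Icc (-(m : ℤ)) ((n : ℤ) - 1) :=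
    Finset.image_subset_iff.mpr fun s _ => (e (finEquivColI m s)).2
  have enumerate : rows ∘ π = I.orderEmbOfFin hI :=
    Finset.orderEmbOfFin_unique hI (fun s => Finset.mem_image_of_mem _ (Finset.mem_univ _)) sorted
  refine ⟨I, hI, hsub, π, ?_⟩
  rw [← Matrix.det_submatrix_equiv_self (finEquivColI m) (Matrix.submatrix _ e id),
    ← Matrix.det_permute]
  refine congrArg Matrix.det (Matrix.ext fun s t => ?_)
  refine congrArg (fun i => (X (i, finEquivColI m t) : MatRing k m n)) (Subtype.ext ?_)
  exact (congrFun enumerate s).symm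

lemma det_submatrix_mem_deltaSub (e : ColI m → RowI m n) :
    ((Matrix.mvPolynomialX (RowI m n) (ColI m) k).submatrix e id).det ∈ DeltaSub k m n := by
  by_cases he : Function.Injective e
  · obtain ⟨I, hI, hsub, π, dMinor_eq⟩ := exists_dMinor_eq_sign_mul_det k he
    have dMinor_mem : dMinor k m n I hI hsub ∈ DeltaSub k m n :=
      Algebra.subset_adjoin ⟨I, hI, hsub, rfl⟩
    rw [dMinor_eq] at dMinor_mem
    obtain hπ | hπ := Int.units_eq_one_or (Equiv.Perm.sign π) <;> simpa [hπ] using dMinor_mem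
  · obtain ⟨a, b, hab, hne⟩ := Function.not_injective_iff.mp he
    rw [Matrix.det_zero_of_row_eq hne (by ext1 j; simp [hab])]
    exact zero_mem _

variable (m n)

lemma deltaSub_eq_minorSubalgebra : DeltaSub k m n = minorSubalgebra k (RowI m n) (ColI m) := by
  apply le_antisymm <;> refine Algebra.adjoin_le ?_
  · rintro _ ⟨I, hI, hsub, rfl⟩
    exact dMinor_eq_det_submatrix k m n I hI hsub ▸ Algebra.subset_adjoin ⟨_, rfl⟩
  · rintro _ ⟨e, rfl⟩
    exact det_submatrix_mem_deltaSub k e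

lemma det_gvar : (Matrix.of fun i j : SqIdx m 0 => gvar k m 0 i j).det = 1 :=
  calc (Matrix.of fun i j : SqIdx m 0 => gvar k m 0 i j).det
      = Ideal.Quotient.mk (Ideal.span {genDet k m 0 - 1}) (genDet k m 0) :=
        (RingHom.map_det (Ideal.Quotient.mk _) _).symm
    _ = Ideal.Quotient.mk _ 1 :=
        Ideal.Quotient.eq.mpr (Ideal.subset_span (Set.mem_singleton _))
    _ = 1 := map_one _

/-- The generic point of `SL_{m,0}`, i.e. the matrix `(g_{i,j})` over `k[SL_{m,0}]`. -/
def genericSL : Matrix.SpecialLinearGroup (ColI m) (SLring k m 0) :=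
  ⟨(Matrix.of fun i j => gvar k m 0 i j).submatrix (sqIdxEquivColI m).symm
    (sqIdxEquivColI m).symm, by rw [Matrix.det_submatrix_equiv_self, det_gvar]⟩

variable {m} in
lemma exists_map_genericSL_eq {S : Type*} [CommRing S] [Algebra k S]
    (M : Matrix.SpecialLinearGroup (ColI m) S) :
    ∃ θ : SLring k m 0 →ₐ[k] S, (genericSL k m).map θ.toRingHom = M := by
  let N := M.1.submatrix (sqIdxEquivColI m) (sqIdxEquivColI m)
  have eval_genDet : matrixEval N (genDet k m 0) = 1 :=
    calc matrixEval N (genDet k m 0) = N.det := matrixEval_det_submatrix N id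
      _ = 1 := by rw [Matrix.det_submatrix_equiv_self, M.2]
  have relation : Ideal.span {genDet k m 0 - 1} ≤ RingHom.ker (matrixEval (k := k) N) := by
    rw [Ideal.span_le, Set.singleton_subset_iff, SetLike.mem_coe, RingHom.mem_ker, map_sub,
      map_one, eval_genDet, sub_self]
  refine ⟨Ideal.Quotient.liftₐ _ (matrixEval N) relation, Matrix.SpecialLinearGroup.ext _ _ ?_⟩
  intro i j
  refine (matrixEval_X N _).trans ?_
  simp [N]

variable {m n}

lemma lift_comp_coactB {S : Type*} [CommRing S] [Algebra k S] (b : Matrix (RowI m n) (ColI m) S)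
    (θ : SLring k m 0 →ₐ[k] S) :
    (Algebra.TensorProduct.lift (matrixEval b) θ fun _ _ => Commute.all _ _).comp
        (coactB k m n m le_rfl) =
      matrixEval (b * ((genericSL k m).map θ.toRingHom).1) := by
  refine algHom_ext fun p => ?_
  have hp : p.2.1 ∈ Finset.Icc (-(m : ℤ)) (((0 : ℕ) : ℤ) - 1) :=
    ((sqIdxEquivColI m).symm p.2).2
  rw [matrixEval_X, Matrix.mul_apply, ← Equiv.sum_comp (sqIdxEquivColI m), AlgHom.comp_apply,
    coactB, aeval_X, dif_pos hp, map_sum]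
  refine Finset.sum_congr rfl fun l _ => ?_
  have entry : ((genericSL k m).map θ.toRingHom).1 (sqIdxEquivColI m l) p.2 =
      θ (gvar k m 0 l ((sqIdxEquivColI m).symm p.2)) :=
    congrArg (fun i => θ (gvar k m 0 i _)) ((sqIdxEquivColI m).symm_apply_apply l)
  rw [Algebra.TensorProduct.lift_tmul, matrixEval_X, entry]
  rfl

variable {k} in
lemma coactB_eq_tmul_one_iff_mem_slInvariants (f : MatRing k m n) :
    coactB k m n m le_rfl f = f ⊗ₜ[k] (1 : SLring k m 0) ↔
      f ∈ slInvariants k (RowI m n) (ColI m) := by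
  constructor
  · intro coinvariant S _ _ b M
    obtain ⟨θ, rfl⟩ := exists_map_genericSL_eq k M
    rw [← lift_comp_coactB, AlgHom.comp_apply, coinvariant, Algebra.TensorProduct.lift_tmul,
      map_one, mul_one]
  · intro invariant
    let b := (Matrix.mvPolynomialX (RowI m n) (ColI m) k).map
      (Algebra.TensorProduct.includeLeft : MatRing k m n →ₐ[k] MatRing k m n ⊗[k] SLring k m 0)
    have eval_b : matrixEval b = Algebra.TensorProduct.includeLeft := by
      refine algHom_ext fun p => ?_
      rw [matrixEval_X]
      simp [b]
    have evaluated := invariant _ b ((genericSL k m).map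
      (Algebra.TensorProduct.includeRight : SLring k m 0 →ₐ[k] _).toRingHom)
    rwa [← lift_comp_coactB, AlgHom.comp_apply, eval_b,
      Algebra.TensorProduct.lift_includeLeft_includeRight] at evaluated

end Grassmannian

theorem stmt18_general (k : Type) [Field k] [CharZero k] (m n : ℕ) (f : MatRing k m n) :
    coactB k m n m le_rfl f = f ⊗ₜ[k] (1 : SLring k m 0) ↔ f ∈ DeltaSub k m n := by
  rw [coactB_eq_tmul_one_iff_mem_slInvariants, slInvariants_eq_minorSubalgebra,
    deltaSub_eq_minorSubalgebra]

/-- over an algebraically closed field of characteristic 0, a compatible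
family `x ∈ k[M_∞]` is coinvariant for all the coactions `ρ_{(m,n)}` (dual to right
multiplication by `SL_m`) if and only if each component lies in `k[δ_{m,n}]`; that is,
`k[M_∞]^{k[SL_{∞,0}]} = k̂[δ_∞]`. -/
theorem stmt18 (k : Type) [Field k] [IsAlgClosed k] [CharZero k] :
    ∀ x : ↥(MatInf k),
      (∀ p : PIdx, coactB k p.1.1 p.1.2 p.1.1 le_rfl (x.1 p) =
        (x.1 p) ⊗ₜ[k] (1 : SLring k p.1.1 0)) ↔
      (∀ p : PIdx, x.1 p ∈ DeltaSub k p.1.1 p.1.2) := fun x =>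
  forall_congr' fun p => stmt18_general k p.1.1 p.1.2 (x.1 p)

end
end
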